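/- arXiv:2501.11989 — 2 statements merged into one kernel-verified Lean document; each statement's English description precedes it below -/
import Mathlib

section
/- Let $s \in (0,1)$, $p \in (1, n/s]$, and let $u_0$ be defined by $u_0(x) = |x|^{(sp-n)/(p-1)}$ if $sp < n$ and $u_0(x) = \ln(1/|x|)$ if $sp = n$. Then $\int_{\mathbb{R}^n}\int_{\mathbb{R}^n} \frac{|u_0(x)-u_0(y)|^{p-1}}{|x-y|^{n+sp}}\, \big| |x - {\bf e}_1|^{s-n} - |y - {\bf e}_1|^{s-n} \big| \, dy\, dx < \infty$. -/
open MeasureTheory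

noncomputable section

/-!
The increments of `u₀` and of `|x - e| ^ (s - n)` satisfy interpolated Hölder bounds: for each
admissible `θ`, an increment between `x` and `y` is at most a constant times
`|x - y| ^ θ * ρ ^ (-(A + θ))`, where `A` is the order of the pole and `ρ` the distance of the pair
to it. The integrand is therefore bounded by a product of powers of three lengths: `|x - y|` and the
distances of the pair to the two poles. No single choice of Hölder exponents is integrable
everywhere. Near the diagonal one spends the whole vanishing order of the factor whose pole is far
away. Off the diagonal one spends just enough to keep both poles integrable while `|x - y| ^ (-κ)`
remains integrable at infinity. In each region the strict power-counting inequalities leave room for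
radial weights `r ^ (-n ± ε)`, and the resulting majorants are of convolution or product type.
-/

open Set Filter Topology Asymptotics Module

section RealInequalities

variable {a b θ γ : ℝ}

lemma log_sub_log_le_rpow_div (ha : 0 < a) (hab : a ≤ b) (hθ₀ : 0 < θ) (hθ₁ : θ ≤ 1) :
    Real.log b - Real.log a ≤ ((b - a) / a) ^ θ / θ := by
  have hb : 0 < b := ha.trans_le hab
  have hz : 0 ≤ (b - a) / a := div_nonneg (sub_nonneg.2 hab) ha.le
  have hpow : (b / a) ^ θ ≤ 1 + ((b - a) / a) ^ θ := by
    have h := Real.rpow_add_le_add_rpow zero_le_one hz hθ₀.le hθ₁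
    rwa [Real.one_rpow, show 1 + (b - a) / a = b / a by field_simp; ring] at h
  rw [← Real.log_div hb.ne' ha.ne', le_div_iff₀ hθ₀, mul_comm, ← Real.log_rpow (div_pos hb ha)]
  linarith [Real.log_le_sub_one_of_pos (Real.rpow_pos_of_pos (div_pos hb ha) θ)]

lemma rpow_neg_sub_rpow_neg_le (ha : 0 < a) (hb : 0 < b) (γ : ℝ) :
    a ^ (-γ) - b ^ (-γ) ≤ γ * (Real.log b - Real.log a) * a ^ (-γ) := by
  have hexp : b ^ (-γ) = a ^ (-γ) * Real.exp (-(γ * (Real.log b - Real.log a))) := by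
    rw [Real.rpow_def_of_pos ha, Real.rpow_def_of_pos hb, ← Real.exp_add]
    ring_nf
  have hlin := mul_le_mul_of_nonneg_left
    (Real.add_one_le_exp (-(γ * (Real.log b - Real.log a)))) (Real.rpow_pos_of_pos ha (-γ)).le
  rw [hexp]
  linarith

lemma abs_log_sub_log_le (ha : 0 < a) (hb : 0 < b) (hθ₀ : 0 < θ) (hθ₁ : θ ≤ 1) :
    |Real.log a - Real.log b| ≤ θ⁻¹ * (|a - b| ^ θ * min a b ^ (-θ)) := by
  wlog hab : a ≤ b generalizing a b
  · rw [abs_sub_comm, abs_sub_comm a, min_comm]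
    exact this hb ha (le_of_not_ge hab)
  rw [min_eq_left hab, abs_sub_comm, abs_sub_comm a,
    abs_of_nonneg (sub_nonneg.2 (Real.log_le_log ha hab)), abs_of_nonneg (sub_nonneg.2 hab)]
  calc Real.log b - Real.log a ≤ ((b - a) / a) ^ θ / θ := log_sub_log_le_rpow_div ha hab hθ₀ hθ₁
    _ = θ⁻¹ * ((b - a) ^ θ * a ^ (-θ)) := by
      rw [Real.div_rpow (sub_nonneg.2 hab) ha.le, Real.rpow_neg ha.le]
      ring

lemma abs_rpow_neg_sub_rpow_neg_le (ha : 0 < a) (hb : 0 < b) (hγ : 0 ≤ γ) (hθ₀ : 0 < θ)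
    (hθ₁ : θ ≤ 1) :
    |a ^ (-γ) - b ^ (-γ)| ≤ γ * θ⁻¹ * (|a - b| ^ θ * min a b ^ (-(γ + θ))) := by
  wlog hab : a ≤ b generalizing a b
  · rw [abs_sub_comm, abs_sub_comm a, min_comm]
    exact this hb ha (le_of_not_ge hab)
  have hlog := (le_abs_self _).trans (abs_log_sub_log_le hb ha hθ₀ hθ₁)
  rw [min_eq_right hab, abs_sub_comm] at hlog
  rw [min_eq_left hab, abs_of_nonneg
    (sub_nonneg.2 (Real.rpow_le_rpow_of_nonpos ha hab (neg_nonpos.2 hγ)))]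
  calc a ^ (-γ) - b ^ (-γ)
      ≤ γ * (Real.log b - Real.log a) * a ^ (-γ) := rpow_neg_sub_rpow_neg_le ha hb γ
    _ ≤ γ * (θ⁻¹ * (|a - b| ^ θ * a ^ (-θ))) * a ^ (-γ) := by gcongr
    _ = γ * θ⁻¹ * (|a - b| ^ θ * a ^ (-(γ + θ))) := by
      rw [neg_add, Real.rpow_add ha]
      ring

end RealInequalities

section PowerBigO

variable {α β R δ : ℝ}

lemma isBigO_rpow_rpow_Ioc (h : β ≤ α) (R : ℝ) :
    (fun r : ℝ ↦ r ^ α) =O[𝓟 (Ioc 0 R)] fun r ↦ r ^ β := by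
  refine isBigO_principal.2 ⟨R ^ (α - β), fun r hr ↦ ?_⟩
  rw [Real.norm_rpow_of_nonneg hr.1.le, Real.norm_rpow_of_nonneg hr.1.le,
    Real.norm_of_nonneg hr.1.le, ← sub_add_cancel α β, Real.rpow_add hr.1, sub_add_cancel]
  exact mul_le_mul_of_nonneg_right (Real.rpow_le_rpow hr.1.le hr.2 (sub_nonneg.2 h))
    (Real.rpow_nonneg hr.1.le β)

lemma isBigO_rpow_rpow_Ici (h : α ≤ β) (hδ : 0 < δ) :
    (fun r : ℝ ↦ r ^ α) =O[𝓟 (Ici δ)] fun r ↦ r ^ β := by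
  refine isBigO_principal.2 ⟨δ ^ (α - β), fun r hr ↦ ?_⟩
  have hr₀ : 0 < r := hδ.trans_le hr
  rw [Real.norm_rpow_of_nonneg hr₀.le, Real.norm_rpow_of_nonneg hr₀.le,
    Real.norm_of_nonneg hr₀.le, ← sub_add_cancel α β, Real.rpow_add hr₀, sub_add_cancel]
  exact mul_le_mul_of_nonneg_right (Real.rpow_le_rpow_of_nonpos hδ hr (sub_nonpos.2 h))
    (Real.rpow_nonneg hr₀.le β)

lemma isBigO_rpow_one_Ici (h : α ≤ 0) (hδ : 0 < δ) :
    (fun r : ℝ ↦ r ^ α) =O[𝓟 (Ici δ)] fun _ ↦ (1 : ℝ) := by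
  simpa using isBigO_rpow_rpow_Ici h hδ

lemma isBigO_principal_of_norm_le {X F : Type*} [Norm F] {S : Set X} {f : X → F} {g : X → ℝ}
    (h : ∀ x ∈ S, ‖f x‖ ≤ g x) : f =O[𝓟 S] g :=
  .of_norm_eventuallyLE (eventually_principal.2 h)

lemma isBigO_principal_comp {X Y F G : Type*} [Norm F] [Norm G] {S : Set X} {T : Set Y}
    {f : Y → F} {g : Y → G} {k : X → Y} (h : f =O[𝓟 T] g) (hk : MapsTo k S T) :
    (fun x ↦ f (k x)) =O[𝓟 S] fun x ↦ g (k x) :=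
  h.comp_tendsto (tendsto_principal_principal.2 hk)

lemma isBigO_min_right {X F : Type*} [Norm F] {l : Filter X} {f : X → F} {g h : X → ℝ}
    (hg : f =O[l] g) (hh : f =O[l] h) : f =O[l] fun x ↦ min (g x) (h x) := by
  obtain ⟨c, hc⟩ := hg.bound
  obtain ⟨c', hc'⟩ := hh.bound
  refine IsBigO.of_bound (max c c') ?_
  filter_upwards [hc, hc'] with x hx hx'
  rcases min_choice (g x) (h x) with hmin | hmin <;> rw [hmin]
  · exact hx.trans (by gcongr; exact le_max_left _ _)
  · exact hx'.trans (by gcongr; exact le_max_right _ _)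

end PowerBigO

/-- A radial profile decaying like `r ^ (-N + ε)` near `0` and like `r ^ (-N - ε)` near `∞`,
so that `x ↦ radialWeight N ε ‖x‖` is integrable in dimension `N` for every `ε > 0`. -/
def radialWeight (N ε r : ℝ) : ℝ := min (r ^ (-N + ε)) (r ^ (-N - ε))

section RadialWeight

variable {N ε r A B R δ : ℝ}

lemma radialWeight_nonneg (hr : 0 ≤ r) : 0 ≤ radialWeight N ε r :=
  le_min (Real.rpow_nonneg hr _) (Real.rpow_nonneg hr _)

lemma measurable_radialWeight (N ε : ℝ) : Measurable (radialWeight N ε) := by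
  unfold radialWeight
  fun_prop

lemma radialWeight_min_le_add {t : ℝ} (hr : 0 ≤ r) (ht : 0 ≤ t) :
    radialWeight N ε (min r t) ≤ radialWeight N ε r + radialWeight N ε t := by
  rcases min_choice r t with h | h <;> rw [h]
  · exact le_add_of_nonneg_right (radialWeight_nonneg ht)
  · exact le_add_of_nonneg_left (radialWeight_nonneg hr)

lemma isBigO_rpow_neg_radialWeight_Ioc (hε : 0 ≤ ε) (hA : A ≤ N - ε) (R : ℝ) :
    (fun r : ℝ ↦ r ^ (-A)) =O[𝓟 (Ioc 0 R)] radialWeight N ε :=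
  isBigO_min_right (isBigO_rpow_rpow_Ioc (by linarith) R)
    (isBigO_rpow_rpow_Ioc (by linarith) R)

lemma isBigO_rpow_neg_radialWeight_Ici (hε : 0 ≤ ε) (hA : N + ε ≤ A) (hδ : 0 < δ) :
    (fun r : ℝ ↦ r ^ (-A)) =O[𝓟 (Ici δ)] radialWeight N ε :=
  isBigO_min_right (isBigO_rpow_rpow_Ici (by linarith) hδ)
    (isBigO_rpow_rpow_Ici (by linarith) hδ)

lemma isBigO_rpow_neg_mul_rpow_neg_radialWeight_Ioc (hε : 0 ≤ ε) (hA : 0 ≤ A)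
    (hBN : B ≤ N - ε) (hδ : 0 < δ) :
    (fun z : ℝ × ℝ ↦ z.1 ^ (-A) * z.2 ^ (-B)) =O[𝓟 (Ici δ ×ˢ Ioc 0 δ)]
      fun z ↦ radialWeight N ε z.1 + radialWeight N ε z.2 := by
  have hfst : (fun z : ℝ × ℝ ↦ z.1 ^ (-A)) =O[𝓟 (Ici δ ×ˢ Ioc 0 δ)] fun _ ↦ (1 : ℝ) :=
    isBigO_principal_comp (isBigO_rpow_one_Ici (neg_nonpos.2 hA) hδ) fun _ hz ↦ hz.1
  have hsnd : (fun z : ℝ × ℝ ↦ z.2 ^ (-B)) =O[𝓟 (Ici δ ×ˢ Ioc 0 δ)]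
      fun z ↦ radialWeight N ε z.2 :=
    isBigO_principal_comp (isBigO_rpow_neg_radialWeight_Ioc hε hBN δ) fun _ hz ↦ hz.2
  refine (hfst.mul hsnd).trans (isBigO_principal_of_norm_le fun z ⟨hz₁, hz₂⟩ ↦ ?_)
  rw [one_mul, Real.norm_of_nonneg (radialWeight_nonneg hz₂.1.le)]
  exact le_add_of_nonneg_left (radialWeight_nonneg (hδ.le.trans hz₁))

lemma isBigO_rpow_neg_mul_rpow_neg_radialWeight_Ici (hε : 0 ≤ ε) (hA : 0 ≤ A) (hB : 0 ≤ B)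
    (hAB : N + ε ≤ A + B) (hδ : 0 < δ) :
    (fun z : ℝ × ℝ ↦ z.1 ^ (-A) * z.2 ^ (-B)) =O[𝓟 (Ici δ ×ˢ Ici δ)]
      fun z ↦ radialWeight N ε z.1 + radialWeight N ε z.2 := by
  have hmin : (fun z : ℝ × ℝ ↦ min z.1 z.2 ^ (-(A + B))) =O[𝓟 (Ici δ ×ˢ Ici δ)]
      fun z ↦ radialWeight N ε (min z.1 z.2) :=
    isBigO_principal_comp (isBigO_rpow_neg_radialWeight_Ici hε hAB hδ)
      fun _ hz ↦ le_min (mem_Ici.1 hz.1) (mem_Ici.1 hz.2)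
  have hle : (fun z : ℝ × ℝ ↦ z.1 ^ (-A) * z.2 ^ (-B)) =O[𝓟 (Ici δ ×ˢ Ici δ)]
      fun z ↦ min z.1 z.2 ^ (-(A + B)) := by
    refine isBigO_principal_of_norm_le fun z hz ↦ ?_
    have hz₁ : 0 < z.1 := hδ.trans_le hz.1
    have hz₂ : 0 < z.2 := hδ.trans_le hz.2
    have hmin : 0 < min z.1 z.2 := lt_min hz₁ hz₂
    rw [Real.norm_of_nonneg (by positivity), neg_add, Real.rpow_add hmin]
    exact mul_le_mul
      (Real.rpow_le_rpow_of_nonpos hmin (min_le_left _ _) (neg_nonpos.2 hA))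
      (Real.rpow_le_rpow_of_nonpos hmin (min_le_right _ _) (neg_nonpos.2 hB))
      (by positivity) (by positivity)
  refine hle.trans (hmin.trans (isBigO_principal_of_norm_le fun z hz ↦ ?_))
  have hz₁ : 0 ≤ z.1 := hδ.le.trans hz.1
  have hz₂ : 0 ≤ z.2 := hδ.le.trans hz.2
  rw [Real.norm_of_nonneg (radialWeight_nonneg (le_min hz₁ hz₂))]
  exact radialWeight_min_le_add hz₁ hz₂

lemma isBigO_rpow_neg_mul_rpow_neg_radialWeight (hε : 0 ≤ ε) (hA : 0 ≤ A) (hB : 0 ≤ B)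
    (hBN : B ≤ N - ε) (hAB : N + ε ≤ A + B) (hδ : 0 < δ) :
    (fun z : ℝ × ℝ ↦ z.1 ^ (-A) * z.2 ^ (-B)) =O[𝓟 (Ici δ ×ˢ Ioi 0)]
      fun z ↦ radialWeight N ε z.1 + radialWeight N ε z.2 := by
  refine ((isBigO_rpow_neg_mul_rpow_neg_radialWeight_Ioc hε hA hBN hδ).sup
    (isBigO_rpow_neg_mul_rpow_neg_radialWeight_Ici hε hA hB hAB hδ)).mono ?_
  rw [sup_principal]
  exact principal_mono.2 fun z hz ↦ (le_total z.2 δ).imp (⟨hz.1, hz.2, ·⟩) (⟨hz.1, ·⟩)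

lemma integrable_radialWeight_norm {E : Type*} [NormedAddCommGroup E] [NormedSpace ℝ E]
    [FiniteDimensional ℝ E] [Nontrivial E] [MeasurableSpace E] [BorelSpace E] (μ : Measure E)
    [μ.IsAddHaarMeasure] (hε : 0 < ε) :
    Integrable (fun x : E ↦ radialWeight (finrank ℝ E) ε ‖x‖) μ := by
  rw [integrable_fun_norm_addHaar μ (f := radialWeight (finrank ℝ E) ε),
    ← Ioc_union_Ioi_eq_Ioi zero_le_one]
  have hmeas : Measurable fun r : ℝ ↦
      r ^ (finrank ℝ E - 1) • radialWeight (finrank ℝ E) ε r :=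
    (measurable_id.pow_const _).smul (measurable_radialWeight _ _)
  have hpow {r : ℝ} (hr : 0 < r) (A : ℝ) :
      r ^ (finrank ℝ E - 1) * r ^ (-(finrank ℝ E : ℝ) + A) = r ^ (-1 + A) := by
    rw [← Real.rpow_natCast, ← Real.rpow_add hr, Nat.cast_pred finrank_pos]
    ring_nf
  have hnorm {r : ℝ} (hr : 0 < r) :
      ‖r ^ (finrank ℝ E - 1) • radialWeight (finrank ℝ E) ε r‖ =
        r ^ (finrank ℝ E - 1) * radialWeight (finrank ℝ E) ε r :=
    Real.norm_of_nonneg (mul_nonneg (pow_nonneg hr.le _) (radialWeight_nonneg hr.le))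
  refine IntegrableOn.union ?_ ?_
  · refine Integrable.mono' (intervalIntegral.intervalIntegrable_rpow' (a := 0) (b := 1)
      (r := -1 + ε) (by linarith)).1 hmeas.aestronglyMeasurable ?_
    filter_upwards [ae_restrict_mem measurableSet_Ioc] with r hr
    rw [hnorm hr.1, ← hpow hr.1]
    exact mul_le_mul_of_nonneg_left (min_le_left _ _) (pow_nonneg hr.1.le _)
  · refine Integrable.mono' (integrableOn_Ioi_rpow_of_lt (a := -1 + -ε) (by linarith) one_pos)
      hmeas.aestronglyMeasurable ?_
    filter_upwards [ae_restrict_mem measurableSet_Ioi] with r hr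
    have hr₀ : 0 < r := one_pos.trans hr
    rw [hnorm hr₀, ← hpow hr₀, ← sub_eq_add_neg]
    exact mul_le_mul_of_nonneg_left (min_le_right _ _) (pow_nonneg hr₀.le _)

end RadialWeight

/-- The distance from `a` to the closer of the two points of the pair `z`. -/
def pairDist {E : Type*} [NormedAddCommGroup E] (a : E) (z : E × E) : ℝ :=
  min ‖z.1 - a‖ ‖z.2 - a‖

/-- A two-point function `U` of size `|x - a| ^ (-A)` near the pole `a`, whose size on pairs of
nearby points is Hölder small with every exponent `θ ∈ (0, q]`, at the scale-invariant cost
`|x - a| ^ (-θ)`. The model case is `U (x, y) = u x - u y` with `u` homogeneous of degree `-A`.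
Pairs containing `a` are excluded, since there the negative power has the junk value `0`. -/
def HasSingularIncrements {E : Type*} [NormedAddCommGroup E] (U : E × E → ℝ) (a : E) (A q : ℝ) :
    Prop :=
  ∀ θ ∈ Ioc 0 q, U =O[𝓟 {z | 0 < pairDist a z}]
    fun z ↦ ‖z.1 - z.2‖ ^ θ * pairDist a z ^ (-(A + θ))

section Increments

variable {E : Type*} [NormedAddCommGroup E] {U V : E × E → ℝ} {a b : E} {A B q r : ℝ} {z : E × E}

lemma pairDist_nonneg (a : E) (z : E × E) : 0 ≤ pairDist a z :=
  le_min (norm_nonneg _) (norm_nonneg _)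

lemma norm_sub_le_pairDist_add_pairDist_add (a b : E) (z : E × E) :
    ‖a - b‖ ≤ pairDist a z + pairDist b z + ‖z.1 - z.2‖ := by
  have h₁ := norm_sub_le_norm_sub_add_norm_sub a z.1 b
  have h₂ := norm_sub_le_norm_sub_add_norm_sub a z.2 b
  have h₃ := norm_sub_le_norm_sub_add_norm_sub z.1 z.2 b
  have h₄ := norm_sub_le_norm_sub_add_norm_sub z.2 z.1 b
  rw [norm_sub_rev a z.1] at h₁
  rw [norm_sub_rev a z.2] at h₂
  rw [norm_sub_rev z.2 z.1] at h₄
  unfold pairDist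
  rcases min_choice ‖z.1 - a‖ ‖z.2 - a‖ with ha | ha <;>
    rcases min_choice ‖z.1 - b‖ ‖z.2 - b‖ with hb | hb <;> rw [ha, hb] <;>
    linarith [norm_nonneg (z.1 - z.2)]

lemma hasSingularIncrements_log_norm_sub (a : E) :
    HasSingularIncrements (fun z ↦ Real.log ‖z.1 - a‖ - Real.log ‖z.2 - a‖) a 0 1 := by
  refine fun θ hθ ↦ isBigO_principal.2 ⟨θ⁻¹, fun z hz ↦ ?_⟩
  obtain ⟨hz₁, hz₂⟩ : 0 < ‖z.1 - a‖ ∧ 0 < ‖z.2 - a‖ := lt_min_iff.1 hz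
  have hθ₀ : 0 < θ := hθ.1
  rw [Real.norm_of_nonneg (mul_nonneg (by positivity) (Real.rpow_nonneg (le_of_lt hz) _)), zero_add]
  refine (abs_log_sub_log_le hz₁ hz₂ hθ.1 hθ.2).trans ?_
  have hdist : |‖z.1 - a‖ - ‖z.2 - a‖| ≤ ‖z.1 - z.2‖ := by
    simpa using abs_norm_sub_norm_le (z.1 - a) (z.2 - a)
  unfold pairDist
  gcongr

lemma hasSingularIncrements_norm_sub_rpow_neg (a : E) {γ : ℝ} (hγ : 0 ≤ γ) :
    HasSingularIncrements (fun z ↦ ‖z.1 - a‖ ^ (-γ) - ‖z.2 - a‖ ^ (-γ)) a γ 1 := by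
  refine fun θ hθ ↦ isBigO_principal.2 ⟨γ * θ⁻¹, fun z hz ↦ ?_⟩
  obtain ⟨hz₁, hz₂⟩ : 0 < ‖z.1 - a‖ ∧ 0 < ‖z.2 - a‖ := lt_min_iff.1 hz
  have hθ₀ : 0 < θ := hθ.1
  rw [Real.norm_of_nonneg (mul_nonneg (by positivity) (Real.rpow_nonneg (le_of_lt hz) _))]
  refine (abs_rpow_neg_sub_rpow_neg_le hz₁ hz₂ hγ hθ.1 hθ.2).trans ?_
  have hdist : |‖z.1 - a‖ - ‖z.2 - a‖| ≤ ‖z.1 - z.2‖ := by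
    simpa using abs_norm_sub_norm_le (z.1 - a) (z.2 - a)
  unfold pairDist
  gcongr

namespace HasSingularIncrements

lemma abs (hU : HasSingularIncrements U a A q) : HasSingularIncrements (fun z ↦ |U z|) a A q :=
  fun θ hθ ↦ (hU θ hθ).abs_left

lemma abs_rpow (hU : HasSingularIncrements U a A q) {k : ℝ} (hk : 0 < k) :
    HasSingularIncrements (fun z ↦ |U z| ^ k) a (k * A) (k * q) := by
  intro θ hθ
  have hθk : θ / k ∈ Ioc 0 q := ⟨div_pos hθ.1 hk, (div_le_iff₀' hk).2 hθ.2⟩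
  have hnonneg (z : E × E) : 0 ≤ ‖z.1 - z.2‖ ^ (θ / k) * pairDist a z ^ (-(A + θ / k)) :=
    mul_nonneg (Real.rpow_nonneg (norm_nonneg _) _) (Real.rpow_nonneg (pairDist_nonneg a z) _)
  refine ((hU _ hθk).abs_left.rpow hk.le (.of_forall hnonneg)).congr_right fun z ↦ ?_
  rw [Real.mul_rpow (Real.rpow_nonneg (norm_nonneg _) _) (Real.rpow_nonneg (pairDist_nonneg a z) _),
    ← Real.rpow_mul (norm_nonneg _), ← Real.rpow_mul (pairDist_nonneg a z)]
  congr 2 <;> field_simp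

end HasSingularIncrements

/-- The pairs on which no singularity of `U (x, y) / |x - y| ^ κ * V (x, y)` is met, when `U` has
its pole at `a` and `V` at `b`. -/
def regularPairs (a b : E) : Set (E × E) :=
  {z | 0 < ‖z.1 - z.2‖ ∧ 0 < pairDist a z ∧ 0 < pairDist b z}

lemma regularPairs_comm (a b : E) : regularPairs a b = regularPairs b a := by
  simp only [regularPairs, and_comm (a := 0 < pairDist a _)]

lemma HasSingularIncrements.isBigO_div_mul (hU : HasSingularIncrements U a A q)
    (hV : HasSingularIncrements V b B r) {θ τ : ℝ} (hθ : θ ∈ Ioc 0 q) (hτ : τ ∈ Ioc 0 r) (κ : ℝ) :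
    (fun z ↦ U z / ‖z.1 - z.2‖ ^ κ * V z) =O[𝓟 (regularPairs a b)] fun z ↦
      ‖z.1 - z.2‖ ^ (-(κ - θ - τ)) * (pairDist a z ^ (-(A + θ)) * pairDist b z ^ (-(B + τ))) := by
  have hU' := (hU θ hθ).mono (principal_mono.2 fun z (hz : z ∈ regularPairs a b) ↦ hz.2.1)
  have hV' := (hV τ hτ).mono (principal_mono.2 fun z (hz : z ∈ regularPairs a b) ↦ hz.2.2)
  have hκ := isBigO_refl (fun z : E × E ↦ (‖z.1 - z.2‖ ^ κ)⁻¹) (𝓟 (regularPairs a b))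
  refine ((hU'.mul hκ).mul hV').congr' (.of_forall fun _ ↦ rfl) (eventually_principal.2 ?_)
  intro z hz
  beta_reduce
  rw [show -(κ - θ - τ) = θ + -κ + τ by ring, Real.rpow_add hz.1, Real.rpow_add hz.1,
    Real.rpow_neg hz.1.le]
  ring

end Increments

/-- Integrability of `|x - y| ^ (-κ) * U (x, y) * V (x, y)` over pairs in dimension `N`, by scaling
in each region where it may fail, for `U` and `V` with poles of order `A`, `B` at distinct points
and vanishing to order `q`, `r` on the diagonal. In the field names, `one` and `both` tell how many
points of the pair approach the pole or infinity. -/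
structure PowerCounting (N κ A q B r : ℝ) : Prop where
  fst_vanishing_pos : 0 < q
  snd_vanishing_pos : 0 < r
  fst_order_nonneg : 0 ≤ A
  snd_order_nonneg : 0 ≤ B
  one_at_fst_pole : A < N
  one_at_snd_pole : B < N
  diagonal : κ < N + q + r
  both_at_fst_pole : κ + A < 2 * N + r
  both_at_snd_pole : κ + B < 2 * N + q
  one_at_infinity : N < κ
  both_at_infinity : 2 * N < κ + A + B

namespace PowerCounting

variable {N κ A q B r : ℝ}

lemma symm (h : PowerCounting N κ A q B r) : PowerCounting N κ B r A q where
  fst_vanishing_pos := h.snd_vanishing_pos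
  snd_vanishing_pos := h.fst_vanishing_pos
  fst_order_nonneg := h.snd_order_nonneg
  snd_order_nonneg := h.fst_order_nonneg
  one_at_fst_pole := h.one_at_snd_pole
  one_at_snd_pole := h.one_at_fst_pole
  diagonal := by linarith [h.diagonal]
  both_at_fst_pole := h.both_at_snd_pole
  both_at_snd_pole := h.both_at_fst_pole
  one_at_infinity := h.one_at_infinity
  both_at_infinity := by linarith [h.both_at_infinity]

lemma exists_exponent_near_diagonal (h : PowerCounting N κ A q B r) :
    ∃ τ ∈ Ioc 0 r, κ - q - τ < N ∧ B + τ < N ∧ N < (A + q) + (B + τ) := by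
  obtain ⟨_, _, _, _, _, _, _, _, _, _, _⟩ := h
  obtain ⟨τ, hτ, hτ'⟩ := exists_between
    (show max 0 (max (κ - q - N) (N - A - B - q)) < min r (N - B) by
      simp only [max_lt_iff, lt_min_iff]
      constructorm* _ ∧ _ <;> linarith)
  simp only [max_lt_iff, lt_min_iff] at hτ hτ'
  exact ⟨τ, ⟨hτ.1, hτ'.1.le⟩, by linarith, by linarith, by linarith⟩

lemma exists_exponents_off_diagonal (h : PowerCounting N κ A q B r) :
    ∃ θ ∈ Ioc 0 q, ∃ τ ∈ Ioc 0 r,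
      A + θ < N ∧ B + τ < N ∧ N < κ - θ - τ ∧ N < (A + θ) + (B + τ) := by
  obtain ⟨hq, hr, _, _, _, _, _, _, _, _, _⟩ := h
  set θ₁ := min q (N - A) with hθ₁
  set τ₁ := min r (N - B) with hτ₁
  have hθ₁_pos : 0 < θ₁ := lt_min hq (by linarith)
  have hτ₁_pos : 0 < τ₁ := lt_min hr (by linarith)
  have hsum : N - A - B < θ₁ + τ₁ := by
    rw [hθ₁, hτ₁, ← min_add_add_right, ← min_add_add_left, ← min_add_add_left]
    simp only [lt_min_iff]
    constructorm* _ ∧ _ <;> linarith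
  -- A total exponent `σ` is fixed first, then split in proportion to the caps `θ₁` and `τ₁`.
  obtain ⟨σ, hσ, hσ'⟩ := exists_between
    (show max 0 (N - A - B) < min (κ - N) (θ₁ + τ₁) by
      simp only [max_lt_iff, lt_min_iff]
      constructorm* _ ∧ _ <;> linarith)
  simp only [max_lt_iff, lt_min_iff] at hσ hσ'
  have ht : 0 < σ / (θ₁ + τ₁) := div_pos hσ.1 (by positivity)
  have ht' : σ / (θ₁ + τ₁) < 1 := (div_lt_one (by positivity)).2 hσ'.2
  have hsplit : σ / (θ₁ + τ₁) * θ₁ + σ / (θ₁ + τ₁) * τ₁ = σ := by field_simp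
  have hθ := mul_lt_of_lt_one_left hθ₁_pos ht'
  have hτ := mul_lt_of_lt_one_left hτ₁_pos ht'
  have hθq := min_le_left q (N - A)
  have hθN := min_le_right q (N - A)
  have hτr := min_le_left r (N - B)
  have hτN := min_le_right r (N - B)
  exact ⟨σ / (θ₁ + τ₁) * θ₁, ⟨by positivity, by linarith⟩, σ / (θ₁ + τ₁) * τ₁,
    ⟨by positivity, by linarith⟩, by linarith, by linarith, by linarith, by linarith⟩

end PowerCounting

/-- A weight with the singularity of `radialWeight N ε` at each of the two poles `a` and `b`. -/
def twoPoleWeight {E : Type*} [NormedAddCommGroup E] (N ε : ℝ) (a b x : E) : ℝ :=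
  radialWeight N ε ‖x - a‖ + radialWeight N ε ‖x - b‖

/-- The integrable majorant for power-counting estimates: the first summand serves the pairs that
are close to each other or far from one of the poles, the second those close to both poles. -/
def pairMajorant {E : Type*} [NormedAddCommGroup E] (N ε : ℝ) (a b : E) (z : E × E) : ℝ :=
  radialWeight N ε ‖z.1 - z.2‖ * (twoPoleWeight N ε a b z.1 + twoPoleWeight N ε a b z.2) +
    twoPoleWeight N ε a b z.1 * twoPoleWeight N ε a b z.2

section Majorant

variable {E : Type*} [NormedAddCommGroup E] {U V : E × E → ℝ} {a b : E}
  {N ε κ A B q r δ θ τ : ℝ}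

lemma twoPoleWeight_nonneg (N ε : ℝ) (a b x : E) : 0 ≤ twoPoleWeight N ε a b x :=
  add_nonneg (radialWeight_nonneg (norm_nonneg _)) (radialWeight_nonneg (norm_nonneg _))

lemma pairMajorant_comm (N ε : ℝ) (a b : E) : pairMajorant N ε a b = pairMajorant N ε b a := by
  funext z
  simp only [pairMajorant, twoPoleWeight, add_comm (radialWeight N ε ‖_ - a‖)]

lemma radialWeight_pairDist_add_le (N ε : ℝ) (a b : E) (z : E × E) :
    radialWeight N ε (pairDist a z) + radialWeight N ε (pairDist b z) ≤
      twoPoleWeight N ε a b z.1 + twoPoleWeight N ε a b z.2 :=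
  (add_le_add (radialWeight_min_le_add (norm_nonneg _) (norm_nonneg _))
    (radialWeight_min_le_add (norm_nonneg _) (norm_nonneg _))).trans_eq (add_add_add_comm _ _ _ _)

lemma radialWeight_pairDist_mul_le {z : E × E} (N ε : ℝ)
    (hz : pairDist a z + pairDist b z < ‖a - b‖) :
    radialWeight N ε (pairDist a z) * radialWeight N ε (pairDist b z) ≤
      twoPoleWeight N ε a b z.1 * twoPoleWeight N ε a b z.2 := by
  have hfst (x : E) : radialWeight N ε ‖x - a‖ ≤ twoPoleWeight N ε a b x :=
    le_add_of_nonneg_right (radialWeight_nonneg (norm_nonneg _))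
  have hsnd (x : E) : radialWeight N ε ‖x - b‖ ≤ twoPoleWeight N ε a b x :=
    le_add_of_nonneg_left (radialWeight_nonneg (norm_nonneg _))
  have hfar (x : E) : ‖a - b‖ ≤ ‖x - a‖ + ‖x - b‖ := by
    simpa only [norm_sub_rev a x] using norm_sub_le_norm_sub_add_norm_sub a x b
  have hprod (x y : E) : radialWeight N ε ‖x - a‖ * radialWeight N ε ‖y - b‖ ≤
      twoPoleWeight N ε a b x * twoPoleWeight N ε a b y :=
    mul_le_mul (hfst x) (hsnd y) (radialWeight_nonneg (norm_nonneg _))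
      (twoPoleWeight_nonneg N ε a b x)
  unfold pairDist at hz ⊢
  rcases min_choice ‖z.1 - a‖ ‖z.2 - a‖ with ha | ha <;>
    rcases min_choice ‖z.1 - b‖ ‖z.2 - b‖ with hb | hb <;> rw [ha, hb] at hz ⊢
  · exact absurd hz (hfar z.1).not_gt
  · exact hprod z.1 z.2
  · exact (hprod z.2 z.1).trans_eq (mul_comm _ _)
  · exact absurd hz (hfar z.2).not_gt

lemma isBigO_pairMajorant_of_le_pairDist (hU : HasSingularIncrements U a A q)
    (hV : HasSingularIncrements V b B r) {S : Set (E × E)}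
    (hS : S ⊆ {z ∈ regularPairs a b | δ ≤ pairDist a z}) (hδ : 0 < δ)
    (hθ : θ ∈ Ioc 0 q) (hτ : τ ∈ Ioc 0 r) (hA : 0 ≤ A) (hB : 0 ≤ B) (hε : 0 ≤ ε)
    (hdiff : (fun z : E × E ↦ ‖z.1 - z.2‖ ^ (-(κ - θ - τ))) =O[𝓟 S]
      fun z ↦ radialWeight N ε ‖z.1 - z.2‖)
    (hpole : B + τ ≤ N - ε) (hinf : N + ε ≤ (A + θ) + (B + τ)) :
    (fun z ↦ U z / ‖z.1 - z.2‖ ^ κ * V z) =O[𝓟 S] pairMajorant N ε a b := by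
  have hUV := (hU.isBigO_div_mul hV hθ hτ κ).mono (principal_mono.2 fun z hz ↦ (hS hz).1)
  have hpoles : (fun z ↦ pairDist a z ^ (-(A + θ)) * pairDist b z ^ (-(B + τ))) =O[𝓟 S]
      fun z ↦ radialWeight N ε (pairDist a z) + radialWeight N ε (pairDist b z) :=
    isBigO_principal_comp (k := fun z ↦ (pairDist a z, pairDist b z))
      (isBigO_rpow_neg_mul_rpow_neg_radialWeight hε (add_nonneg hA hθ.1.le)
        (add_nonneg hB hτ.1.le) hpole hinf hδ) fun z hz ↦ ⟨(hS hz).2, (hS hz).1.2.2⟩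
  refine (hUV.trans (hdiff.mul hpoles)).trans (isBigO_principal_of_norm_le fun z _ ↦ ?_)
  have hd : 0 ≤ radialWeight N ε ‖z.1 - z.2‖ := radialWeight_nonneg (norm_nonneg _)
  rw [Real.norm_of_nonneg (mul_nonneg hd (add_nonneg (radialWeight_nonneg (pairDist_nonneg a z))
    (radialWeight_nonneg (pairDist_nonneg b z))))]
  exact (mul_le_mul_of_nonneg_left (radialWeight_pairDist_add_le N ε a b z) hd).trans
    (le_add_of_nonneg_right
      (mul_nonneg (twoPoleWeight_nonneg N ε a b _) (twoPoleWeight_nonneg N ε a b _)))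

lemma isBigO_pairMajorant_near_diagonal (hU : HasSingularIncrements U a A q)
    (hV : HasSingularIncrements V b B r) (h : PowerCounting N κ A q B r) (hδ : 0 < δ) :
    ∀ᶠ ε in 𝓝[>] 0, (fun z ↦ U z / ‖z.1 - z.2‖ ^ κ * V z)
      =O[𝓟 {z ∈ regularPairs a b | δ ≤ pairDist a z ∧ ‖z.1 - z.2‖ ≤ δ}] pairMajorant N ε a b := by
  obtain ⟨τ, hτ, hdiag, hpole, hinf⟩ := h.exists_exponent_near_diagonal
  filter_upwards [Ioc_mem_nhdsGT (sub_pos.2 hdiag), Ioc_mem_nhdsGT (sub_pos.2 hpole),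
    Ioc_mem_nhdsGT (sub_pos.2 hinf)] with ε hε hε' hε''
  exact isBigO_pairMajorant_of_le_pairDist hU hV (fun z hz ↦ ⟨hz.1, hz.2.1⟩) hδ
    ⟨h.fst_vanishing_pos, le_rfl⟩ hτ h.fst_order_nonneg h.snd_order_nonneg hε.1.le
    (isBigO_principal_comp (isBigO_rpow_neg_radialWeight_Ioc hε.1.le (by linarith [hε.2]) δ)
      fun z hz ↦ ⟨hz.1.1, hz.2.2⟩)
    (by linarith [hε'.2]) (by linarith [hε''.2])

lemma isBigO_pairMajorant_off_diagonal (hU : HasSingularIncrements U a A q)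
    (hV : HasSingularIncrements V b B r) (h : PowerCounting N κ A q B r) (hδ : 0 < δ) :
    ∀ᶠ ε in 𝓝[>] 0, (fun z ↦ U z / ‖z.1 - z.2‖ ^ κ * V z)
      =O[𝓟 {z ∈ regularPairs a b | δ ≤ pairDist a z ∧ δ ≤ ‖z.1 - z.2‖}] pairMajorant N ε a b := by
  obtain ⟨θ, hθ, τ, hτ, -, hpole, hdiff, hinf⟩ := h.exists_exponents_off_diagonal
  filter_upwards [Ioc_mem_nhdsGT (sub_pos.2 hdiff), Ioc_mem_nhdsGT (sub_pos.2 hpole),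
    Ioc_mem_nhdsGT (sub_pos.2 hinf)] with ε hε hε' hε''
  exact isBigO_pairMajorant_of_le_pairDist hU hV (fun z hz ↦ ⟨hz.1, hz.2.1⟩) hδ
    hθ hτ h.fst_order_nonneg h.snd_order_nonneg hε.1.le
    (isBigO_principal_comp (isBigO_rpow_neg_radialWeight_Ici hε.1.le (by linarith [hε.2]) hδ)
      fun z hz ↦ hz.2.2)
    (by linarith [hε'.2]) (by linarith [hε''.2])

lemma isBigO_pairMajorant_away_from_pole (hU : HasSingularIncrements U a A q)
    (hV : HasSingularIncrements V b B r) (h : PowerCounting N κ A q B r) (hδ : 0 < δ) :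
    ∀ᶠ ε in 𝓝[>] 0, (fun z ↦ U z / ‖z.1 - z.2‖ ^ κ * V z)
      =O[𝓟 {z ∈ regularPairs a b | δ ≤ pairDist a z}] pairMajorant N ε a b := by
  filter_upwards [isBigO_pairMajorant_near_diagonal hU hV h hδ,
    isBigO_pairMajorant_off_diagonal hU hV h hδ] with ε hnear hoff
  refine (hnear.sup hoff).mono ?_
  rw [sup_principal]
  exact principal_mono.2 fun z hz ↦
    (le_total ‖z.1 - z.2‖ δ).imp (⟨hz.1, hz.2, ·⟩) (⟨hz.1, hz.2, ·⟩)

lemma isBigO_pairMajorant_near_both_poles (hU : HasSingularIncrements U a A q)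
    (hV : HasSingularIncrements V b B r) (h : PowerCounting N κ A q B r) (hδ : 0 < δ)
    (hab : 2 * δ < ‖a - b‖) :
    ∀ᶠ ε in 𝓝[>] 0, (fun z ↦ U z / ‖z.1 - z.2‖ ^ κ * V z)
      =O[𝓟 {z ∈ regularPairs a b | pairDist a z ≤ δ ∧ pairDist b z ≤ δ ∧ δ ≤ ‖z.1 - z.2‖}]
        pairMajorant N ε a b := by
  obtain ⟨θ, hθ, τ, hτ, hpole_a, hpole_b, hdiff, -⟩ := h.exists_exponents_off_diagonal
  filter_upwards [Ioc_mem_nhdsGT (sub_pos.2 hpole_a), Ioc_mem_nhdsGT (sub_pos.2 hpole_b)]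
    with ε hε hε'
  set S := {z ∈ regularPairs a b | pairDist a z ≤ δ ∧ pairDist b z ≤ δ ∧ δ ≤ ‖z.1 - z.2‖}
  have hUV := (hU.isBigO_div_mul hV hθ hτ κ).mono (principal_mono.2 fun z (hz : z ∈ S) ↦ hz.1)
  have hd : (fun z : E × E ↦ ‖z.1 - z.2‖ ^ (-(κ - θ - τ))) =O[𝓟 S] fun _ ↦ (1 : ℝ) :=
    isBigO_principal_comp
      (isBigO_rpow_one_Ici (by linarith [h.fst_order_nonneg, h.one_at_fst_pole]) hδ)
      fun z hz ↦ hz.2.2.2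
  have ha : (fun z ↦ pairDist a z ^ (-(A + θ))) =O[𝓟 S] fun z ↦ radialWeight N ε (pairDist a z) :=
    isBigO_principal_comp (isBigO_rpow_neg_radialWeight_Ioc hε.1.le (by linarith [hε.2]) δ)
      fun z hz ↦ ⟨hz.1.2.1, hz.2.1⟩
  have hb : (fun z ↦ pairDist b z ^ (-(B + τ))) =O[𝓟 S] fun z ↦ radialWeight N ε (pairDist b z) :=
    isBigO_principal_comp (isBigO_rpow_neg_radialWeight_Ioc hε.1.le (by linarith [hε'.2]) δ)
      fun z hz ↦ ⟨hz.1.2.2, hz.2.2.1⟩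
  refine (hUV.trans (hd.mul (ha.mul hb))).trans (isBigO_principal_of_norm_le fun z hz ↦ ?_)
  rw [one_mul, Real.norm_of_nonneg (mul_nonneg (radialWeight_nonneg (pairDist_nonneg a z))
    (radialWeight_nonneg (pairDist_nonneg b z)))]
  exact (radialWeight_pairDist_mul_le N ε (by linarith [hz.2.1, hz.2.2.1])).trans
    (le_add_of_nonneg_left (mul_nonneg (radialWeight_nonneg (norm_nonneg _))
      (add_nonneg (twoPoleWeight_nonneg N ε a b _) (twoPoleWeight_nonneg N ε a b _))))

lemma isBigO_pairMajorant (hU : HasSingularIncrements U a A q)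
    (hV : HasSingularIncrements V b B r) (h : PowerCounting N κ A q B r) (hab : a ≠ b) :
    ∀ᶠ ε in 𝓝[>] 0, (fun z ↦ U z / ‖z.1 - z.2‖ ^ κ * V z)
      =O[𝓟 (regularPairs a b)] pairMajorant N ε a b := by
  have hdist : 0 < ‖a - b‖ := norm_pos_iff.2 (sub_ne_zero.2 hab)
  have hδ : 0 < ‖a - b‖ / 3 := by positivity
  filter_upwards [isBigO_pairMajorant_away_from_pole hU hV h hδ,
    isBigO_pairMajorant_away_from_pole hV hU h.symm hδ,
    isBigO_pairMajorant_near_both_poles hU hV h hδ (by linarith)] with ε ha hb hboth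
  have hswap : (fun z ↦ V z / ‖z.1 - z.2‖ ^ κ * U z) = fun z ↦ U z / ‖z.1 - z.2‖ ^ κ * V z := by
    funext z
    ring
  rw [regularPairs_comm, pairMajorant_comm, hswap] at hb
  refine ((ha.sup hb).sup hboth).mono ?_
  rw [sup_principal, sup_principal]
  refine principal_mono.2 fun z hz ↦ ?_
  rcases le_or_gt (‖a - b‖ / 3) (pairDist a z) with hza | hza
  · exact .inl (.inl ⟨hz, hza⟩)
  rcases le_or_gt (‖a - b‖ / 3) (pairDist b z) with hzb | hzb
  · exact .inl (.inr ⟨hz, hzb⟩)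
  · exact .inr ⟨hz, hza.le, hzb.le,
      by linarith [norm_sub_le_pairDist_add_pairDist_add a b z]⟩

end Majorant

section Integrability

lemma lintegral_lintegral_ofReal_lt_top_of_isBigO {X Y : Type*} [MeasurableSpace X]
    [MeasurableSpace Y] {μ : Measure X} {ν : Measure Y} [SFinite ν] {f g : X × Y → ℝ}
    {S : Set (X × Y)} (hfg : f =O[𝓟 S] g) (hg : Integrable g (μ.prod ν))
    (hS : ∀ᵐ x ∂μ, ∀ᵐ y ∂ν, (x, y) ∈ S) :
    ∫⁻ x, ∫⁻ y, ENNReal.ofReal (f (x, y)) ∂ν ∂μ < ⊤ := by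
  obtain ⟨c, hc⟩ := isBigO_principal.1 hfg
  have hcg : Integrable (fun z ↦ c * ‖g z‖) (μ.prod ν) := hg.norm.const_mul c
  calc ∫⁻ x, ∫⁻ y, ENNReal.ofReal (f (x, y)) ∂ν ∂μ
      ≤ ∫⁻ x, ∫⁻ y, ENNReal.ofReal (c * ‖g (x, y)‖) ∂ν ∂μ := by
        refine lintegral_mono_ae (hS.mono fun x hx ↦ lintegral_mono_ae (hx.mono fun y hy ↦ ?_))
        exact ENNReal.ofReal_le_ofReal ((le_abs_self _).trans (hc _ hy))
    _ = ∫⁻ z, ENNReal.ofReal (c * ‖g z‖) ∂μ.prod ν :=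
        (lintegral_prod _ hcg.aemeasurable.ennreal_ofReal).symm
    _ < ⊤ := hcg.lintegral_lt_top

variable {E : Type*} [NormedAddCommGroup E] [MeasurableSpace E] (μ : Measure E)

lemma ae_ae_mem_regularPairs [NullSingletonClass μ] (a b : E) :
    ∀ᵐ x ∂μ, ∀ᵐ y ∂μ, (x, y) ∈ regularPairs a b := by
  have hpos {x y : E} (h : x ≠ y) : 0 < ‖x - y‖ := norm_pos_iff.2 (sub_ne_zero.2 h)
  filter_upwards [μ.ae_ne a, μ.ae_ne b] with x hxa hxb
  filter_upwards [μ.ae_ne a, μ.ae_ne b, μ.ae_ne x] with y hya hyb hyx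
  exact ⟨hpos hyx.symm, lt_min (hpos hxa) (hpos hya), lt_min (hpos hxb) (hpos hyb)⟩

variable [NormedSpace ℝ E] [FiniteDimensional ℝ E] [BorelSpace E] [μ.IsAddHaarMeasure]

lemma integrable_pairMajorant [Nontrivial E] {ε : ℝ} (hε : 0 < ε) (a b : E) :
    Integrable (pairMajorant (finrank ℝ E) ε a b) (μ.prod μ) := by
  have hK : Integrable (fun x : E ↦ radialWeight (finrank ℝ E) ε ‖x‖) μ :=
    integrable_radialWeight_norm μ hε
  have hW : Integrable (twoPoleWeight (finrank ℝ E) ε a b) μ :=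
    (hK.comp_sub_right a).add (hK.comp_sub_right b)
  have hsnd : Integrable (fun z : E × E ↦ radialWeight (finrank ℝ E) ε ‖z.1 - z.2‖ *
      twoPoleWeight (finrank ℝ E) ε a b z.2) (μ.prod μ) := by
    simpa only [ContinuousLinearMap.mul_apply', mul_comm] using
      hW.convolution_integrand (ContinuousLinearMap.mul ℝ ℝ) hK
  have hfst : Integrable (fun z : E × E ↦ radialWeight (finrank ℝ E) ε ‖z.1 - z.2‖ *
      twoPoleWeight (finrank ℝ E) ε a b z.1) (μ.prod μ) := by
    simpa only [Function.comp_def, Prod.fst_swap, Prod.snd_swap, norm_sub_rev] using hsnd.swap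
  exact ((hfst.add hsnd).congr (.of_forall fun z ↦ (mul_add _ _ _).symm)).add (hW.mul_prod hW)

theorem lintegral_lintegral_ofReal_lt_top_of_powerCounting {U V : E × E → ℝ} {a b : E}
    {κ A q B r : ℝ} (hU : HasSingularIncrements U a A q) (hV : HasSingularIncrements V b B r)
    (hab : a ≠ b) (h : PowerCounting (finrank ℝ E) κ A q B r) :
    ∫⁻ x, ∫⁻ y, ENNReal.ofReal (U (x, y) / ‖x - y‖ ^ κ * V (x, y)) ∂μ ∂μ < ⊤ := by
  have : Nontrivial E := ⟨a, b, hab⟩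
  obtain ⟨ε, hbound, hε⟩ := ((isBigO_pairMajorant hU hV h hab).and self_mem_nhdsWithin).exists
  exact lintegral_lintegral_ofReal_lt_top_of_isBigO hbound (integrable_pairMajorant μ hε a b)
    (ae_ae_mem_regularPairs μ a b)

end Integrability

section FractionalLaplacian

variable {s p : ℝ}

lemma hasSingularIncrements_fundamentalSolution {E : Type*} [NormedAddCommGroup E] {d : ℝ}
    (hp : 1 < p) (hsp : s * p ≤ d) {u₀ : E → ℝ}
    (hu₀ : ∀ x, u₀ x =
      if s * p < d then ‖x‖ ^ ((s * p - d) / (p - 1)) else Real.log (1 / ‖x‖)) :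
    HasSingularIncrements (fun z ↦ u₀ z.1 - u₀ z.2) 0 ((d - s * p) / (p - 1)) 1 := by
  rcases hsp.lt_or_eq with hlt | heq
  · have hγ : 0 ≤ (d - s * p) / (p - 1) := div_nonneg (sub_nonneg.2 hsp) (by linarith)
    simpa only [hu₀, if_pos hlt, sub_zero, ← neg_div, neg_sub] using
      hasSingularIncrements_norm_sub_rpow_neg (0 : E) hγ
  · intro θ hθ
    simpa only [hu₀, heq, lt_irrefl, if_false, one_div, Real.log_inv, sub_self, zero_div,
      sub_zero, neg_sub, neg_sub_neg] using
      (hasSingularIncrements_log_norm_sub (0 : E) θ hθ).neg_left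

lemma powerCounting_fundamentalSolution {d : ℝ} (hd : 1 ≤ d) (hs : s ∈ Ioo 0 1) (hp : 1 < p)
    (hsp : s * p ≤ d) : PowerCounting d (d + s * p) (d - s * p) (p - 1) (d - s) 1 := by
  obtain ⟨hs₀, hs₁⟩ := hs
  have hs_lt : s < s * p := lt_mul_of_one_lt_right hs₀ hp
  have hsp_lt : s * (p - 1) < p - 1 := mul_lt_of_lt_one_left (by linarith) hs₁
  constructor <;> linarith

end FractionalLaplacian

theorem stmt_11_general {E : Type*} [NormedAddCommGroup E] [NormedSpace ℝ E]
    [FiniteDimensional ℝ E] [MeasurableSpace E] [BorelSpace E] (μ : Measure E)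
    [μ.IsAddHaarMeasure] {n : ℕ} (hn : finrank ℝ E = n) {s p : ℝ} (hs : s ∈ Ioo 0 1)
    (hp : 1 < p) (hspn : s * p ≤ n) {e : E} (he : e ≠ 0) {u₀ : E → ℝ}
    (hu₀ : ∀ x, u₀ x =
      if s * p < n then ‖x‖ ^ ((s * p - n) / (p - 1)) else Real.log (1 / ‖x‖)) :
    ∫⁻ x, ∫⁻ y, ENNReal.ofReal (|u₀ x - u₀ y| ^ (p - 1) / ‖x - y‖ ^ ((n : ℝ) + s * p) *
      |‖x - e‖ ^ (s - (n : ℝ)) - ‖y - e‖ ^ (s - (n : ℝ))|) ∂μ ∂μ < ⊤ := by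
  subst hn
  have : Nontrivial E := ⟨e, 0, he⟩
  have hd : (1 : ℝ) ≤ finrank ℝ E := by exact_mod_cast finrank_pos (R := ℝ) (M := E)
  have hp₁ : 0 < p - 1 := sub_pos.2 hp
  have hU := (hasSingularIncrements_fundamentalSolution hp hspn hu₀).abs_rpow hp₁
  have hV := (hasSingularIncrements_norm_sub_rpow_neg e
    (sub_nonneg.2 (hs.2.le.trans hd))).abs
  rw [mul_div_cancel₀ _ hp₁.ne', mul_one] at hU
  simp only [neg_sub] at hV
  exact lintegral_lintegral_ofReal_lt_top_of_powerCounting μ hU hV he.symm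
    (powerCounting_fundamentalSolution hd hs hp hspn)

theorem stmt_11 (n : ℕ) (hn : 0 < n) (s p : ℝ) (hs : s ∈ Set.Ioo (0 : ℝ) 1)
    (hp : 1 < p) (hspn : s * p ≤ n)
    (u₀ : EuclideanSpace ℝ (Fin n) → ℝ)
    (hu₀ : ∀ x, u₀ x =
      if s * p < n then ‖x‖ ^ ((s * p - n) / (p - 1)) else Real.log (1 / ‖x‖)) :
    (∫⁻ x : EuclideanSpace ℝ (Fin n), ∫⁻ y : EuclideanSpace ℝ (Fin n),
      ENNReal.ofReal
        (|u₀ x - u₀ y| ^ (p - 1) / ‖x - y‖ ^ ((n : ℝ) + s * p) *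
          |‖x - EuclideanSpace.single (⟨0, hn⟩ : Fin n) (1 : ℝ)‖ ^ (s - (n : ℝ)) -
            ‖y - EuclideanSpace.single (⟨0, hn⟩ : Fin n) (1 : ℝ)‖ ^ (s - (n : ℝ))|)) < ⊤ :=
  stmt_11_general volume finrank_euclideanSpace_fin hs hp hspn (by simp) hu₀
end
end

section
/- Let $s \in (0,1)$, $p \in (1,\infty)$ with $sp < n$, and $\sigma > 0$ with $sp + \sigma < n$. Set $\gamma := \frac{sp-n+\sigma}{p-1} < 0$. Then the principal value integral $\mathrm{p.v.}\int_{\mathbb{R}^n} \frac{\big|1 - |z|^{\gamma}\big|^{p-2}\,(1 - |z|^{\gamma})}{|{\bf e}_1 - z|^{n+sp}}\,dz$ converges to a strictly positive real number. -/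
open MeasureTheory Filter

noncomputable section

/-!
Let `F` be the integrand. The inversion `z ↦ z / |z|²` in the unit sphere fixes `e₁` and carries
`{|z| > 1}` to the punctured unit ball. By the choice of `γ`, the pullback `G` of `F`, Jacobian
included, satisfies `F = -|z|^σ G` there. Folding the exterior onto the ball thus leaves the
integrand `(1 - |z|^σ) G`, which is positive. Since `G = O(|e₁ - z|^(p - 1 - n - sp))` near `e₁`,
the extra factor `1 - |z|^σ = O(|e₁ - z|)` makes it integrable there, because `sp < p`. At `0` it is
of order `|z|^(sp - n)`, which is integrable because `sp > 0`.

The inversion does not preserve the truncation `|e₁ - z| > ε`. The two domains in the ball differ by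
part of a shell of width `O(ε²)` about the sphere of radius `ε`. It has volume `O(ε^(n + 1))`, so it
contributes `O(ε^(p - sp))`, which tends to `0`.
-/

open Metric Module
open EuclideanGeometry (inversion)
open scoped Topology

section Rpow

variable {a c r t x p : ℝ}

theorem one_sub_rpow_le (ha : 0 ≤ a) (hr : 0 ≤ r) (hr1 : r ≤ 1) :
    1 - r ^ a ≤ (1 + a) * (1 - r) := by
  have bernoulli : 1 + (1 + a) * (r - 1) ≤ r ^ (1 + a) := by
    simpa using one_add_mul_self_le_rpow_one_add (s := r - 1) (by linarith)
      (p := 1 + a) (by linarith)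
  have antitone : r ^ (1 + a) ≤ r ^ a :=
    Real.rpow_le_rpow_of_exponent_ge' hr hr1 ha (by linarith)
  linarith

theorem rpow_neg_sub_one_le (ha : 0 ≤ a) (hr : 0 < r) (hr1 : r ≤ 1) :
    r ^ (-a) - 1 ≤ (1 + a) * (r ^ (-a) * (1 - r)) := by
  have hcancel : r ^ (-a) * r ^ a = 1 := by rw [← Real.rpow_add hr, neg_add_cancel, Real.rpow_zero]
  calc r ^ (-a) - 1 = r ^ (-a) * (1 - r ^ a) := by rw [mul_sub, hcancel, mul_one]
    _ ≤ r ^ (-a) * ((1 + a) * (1 - r)) := by gcongr; exact one_sub_rpow_le ha hr.le hr1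
    _ = (1 + a) * (r ^ (-a) * (1 - r)) := by ring

theorem rpow_le_rpow_abs (hc : 0 < c) (hct : c⁻¹ ≤ t) (htc : t ≤ c) : t ^ x ≤ c ^ |x| := by
  have ht : 0 < t := (inv_pos.2 hc).trans_le hct
  rcases le_total 0 x with hx | hx
  · rw [abs_of_nonneg hx]
    gcongr
  · rw [abs_of_nonpos hx, ← neg_neg x, Real.rpow_neg ht.le, ← Real.inv_rpow ht.le, neg_neg]
    exact Real.rpow_le_rpow (by positivity) (inv_le_of_inv_le₀ hc hct) (by linarith)

theorem abs_rpow_sub_two_mul_self_of_pos (hx : 0 < x) : |x| ^ (p - 2) * x = x ^ (p - 1) := by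
  rw [abs_of_pos hx, ← Real.rpow_add_one hx.ne']
  ring_nf

theorem abs_rpow_sub_two_mul_self_of_neg (hx : x < 0) :
    |x| ^ (p - 2) * x = -(-x) ^ (p - 1) := by
  rw [← abs_rpow_sub_two_mul_self_of_pos (neg_pos.2 hx), abs_neg, mul_neg, neg_neg]

end Rpow

section Haar

variable {E : Type*} [NormedAddCommGroup E] [NormedSpace ℝ E] [FiniteDimensional ℝ E]
  [MeasurableSpace E] [BorelSpace E] {μ : Measure E} [μ.IsAddHaarMeasure] {x y : E} {b c : ℝ}

theorem locallyIntegrable_norm_sub_rpow [Nontrivial E] (x : E) (hb : -(finrank ℝ E : ℝ) < b) :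
    LocallyIntegrable (fun z => ‖x - z‖ ^ b) μ := by
  have centered : LocallyIntegrable (fun z : E => ‖z‖ ^ b) μ := by
    refine locallyIntegrable_of_norm_le_rpow (C := 1) (α := -b) finrank_pos (by linarith)
      (.of_forall fun z => ?_) (Measurable.aestronglyMeasurable (by fun_prop))
    rw [neg_neg, one_mul, Real.norm_of_nonneg (by positivity)]
  have translated := (locallyIntegrable_map_homeomorph (Homeomorph.subLeft x)
    (f := fun z : E => ‖z‖ ^ b) (μ := μ)).1
  rw [Homeomorph.coe_subLeft, (μ.measurePreserving_sub_left x).map_eq] at translated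
  exact translated centered

-- Away from `y` the second factor is continuous, away from `x` the first one is.
theorem locallyIntegrable_norm_sub_rpow_mul_norm_sub_rpow [Nontrivial E] (hxy : x ≠ y)
    (hb : -(finrank ℝ E : ℝ) < b) (hc : -(finrank ℝ E : ℝ) < c) :
    LocallyIntegrable (fun z => ‖x - z‖ ^ b * ‖y - z‖ ^ c) μ := by
  have continuousOn_rpow (w : E) (q : ℝ) : ContinuousOn (fun z => ‖w - z‖ ^ q) {w}ᶜ :=
    ContinuousOn.rpow_const (by fun_prop) fun z hz =>
      .inl (norm_ne_zero_iff.2 (sub_ne_zero.2 (Ne.symm hz)))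
  have isOpen (w : E) : IsOpen ({w}ᶜ : Set E) := isOpen_compl_singleton
  intro z
  rcases ne_or_eq z x with hzx | rfl
  · rw [← (isOpen x).nhdsWithin_eq hzx]
    exact ((locallyIntegrable_norm_sub_rpow y hc).locallyIntegrableOn _).continuousOn_mul
      (continuousOn_rpow x b) (isOpen x).isLocallyClosed z hzx
  · rw [← (isOpen y).nhdsWithin_eq hxy]
    exact ((locallyIntegrable_norm_sub_rpow z hb).locallyIntegrableOn _).mul_continuousOn
      (continuousOn_rpow y c) (isOpen y).isLocallyClosed z hxy

theorem measureReal_closedBall_sdiff_ball_le (x : E) {r δ : ℝ} (hr : 0 < r) (hδ : 0 ≤ δ)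
    (hδ1 : δ < 1) :
    μ.real (closedBall x r \ ball x ((1 - δ) * r)) ≤
      finrank ℝ E * δ * (r ^ finrank ℝ E * μ.real (ball 0 1)) := by
  have hρ : 0 < (1 - δ) * r := mul_pos (sub_pos.2 hδ1) hr
  have hball : μ.real (ball x ((1 - δ) * r)) =
      ((1 - δ) * r) ^ finrank ℝ E * μ.real (ball 0 1) := by
    rw [measureReal_def, μ.addHaar_ball_of_pos x hρ, ENNReal.toReal_mul,
      ENNReal.toReal_ofReal (by positivity), measureReal_def]
  rw [measureReal_sdiff (ball_subset_closedBall.trans (closedBall_subset_closedBall (by nlinarith)))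
      measurableSet_ball measure_closedBall_lt_top.ne,
    μ.addHaar_real_closedBall x hr.le, hball, mul_pow]
  have bernoulli : 1 - finrank ℝ E * δ ≤ (1 - δ) ^ finrank ℝ E := by
    linarith [one_add_mul_sub_le_pow (a := 1 - δ) (by linarith) (finrank ℝ E)]
  have hvol : 0 ≤ r ^ finrank ℝ E * μ.real (ball (0 : E) 1) := by positivity
  linarith [mul_le_mul_of_nonneg_right bernoulli hvol]

theorem tendsto_setIntegral_of_subset_shell {F : Type*} [NormedAddCommGroup F] [NormedSpace ℝ F]
    {f : E → F} {S : ℝ → Set E} {M q : ℝ} (hM : 0 ≤ M) (hq : -(finrank ℝ E + 1 : ℝ) < q)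
    (hS : ∀ᶠ ε in 𝓝[>] 0, S ε ⊆ closedBall x ε \ ball x ((1 - ε) * ε))
    (hf : ∀ᶠ ε in 𝓝[>] 0, ∀ z ∈ S ε, ‖f z‖ ≤ M * ε ^ q) :
    Tendsto (fun ε => ∫ z in S ε, f z ∂μ) (𝓝[>] 0) (𝓝 0) := by
  set C := M * (finrank ℝ E * μ.real (ball (0 : E) 1))
  have bound_tendsto : Tendsto (fun ε : ℝ => C * ε ^ (q + (finrank ℝ E + 1))) (𝓝[>] 0) (𝓝 0) := by
    have hpow := (Real.continuousAt_rpow_const 0 (q + (finrank ℝ E + 1))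
      (.inr (by linarith))).tendsto.const_mul C
    rw [Real.zero_rpow (by linarith), mul_zero] at hpow
    exact hpow.mono_left nhdsWithin_le_nhds
  refine squeeze_zero_norm' ?_ bound_tendsto
  filter_upwards [hS, hf, self_mem_nhdsWithin, nhdsWithin_le_nhds (Iio_mem_nhds one_pos)]
    with ε hSε hfε (hε : 0 < ε) (hε1 : ε < 1)
  have shell_finite : μ (closedBall x ε \ ball x ((1 - ε) * ε)) < ⊤ :=
    (measure_mono Set.sdiff_subset).trans_lt measure_closedBall_lt_top
  calc ‖∫ z in S ε, f z ∂μ‖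
      ≤ M * ε ^ q * μ.real (S ε) :=
        norm_setIntegral_le_of_norm_le_const ((measure_mono hSε).trans_lt shell_finite) hfε
    _ ≤ M * ε ^ q * (finrank ℝ E * ε * (ε ^ finrank ℝ E * μ.real (ball 0 1))) := by
        gcongr
        exact (measureReal_mono hSε shell_finite.ne).trans
          (measureReal_closedBall_sdiff_ball_le x hε hε.le hε1)
    _ = C * ε ^ (q + (finrank ℝ E + 1)) := by
        rw [Real.rpow_add hε, Real.rpow_add_one hε.ne', Real.rpow_natCast]
        ring

end Haar

theorem setIntegral_pos_of_isOpen {X : Type*} [TopologicalSpace X] [MeasurableSpace X]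
    [OpensMeasurableSpace X] {μ : Measure X} [μ.IsOpenPosMeasure] {U : Set X} {f : X → ℝ}
    (hU : IsOpen U) (hne : U.Nonempty) (hf : IntegrableOn f U μ) (hpos : ∀ x ∈ U, 0 < f x) :
    0 < ∫ x in U, f x ∂μ := by
  rw [setIntegral_pos_iff_support_of_nonneg_ae
    (ae_restrict_of_forall_mem hU.measurableSet fun x hx => (hpos x hx).le) hf]
  exact (hU.measure_pos μ hne).trans_le (measure_mono fun x hx => ⟨(hpos x hx).ne', hx⟩)

section Inversion

variable {E : Type*} [NormedAddCommGroup E] [InnerProductSpace ℝ E] {e z : E}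

theorem norm_inversion_zero_one (z : E) : ‖inversion 0 1 z‖ = ‖z‖⁻¹ := by
  simpa using EuclideanGeometry.dist_inversion_center (0 : E) z 1

theorem norm_sub_inversion_zero_one (he : ‖e‖ = 1) (hz : z ≠ 0) :
    ‖e - inversion 0 1 z‖ = ‖e - z‖ / ‖z‖ := by
  have he0 : e ≠ 0 := by rintro rfl; simp at he
  have h := EuclideanGeometry.dist_inversion_inversion he0 hz 1
  rw [EuclideanGeometry.inversion_of_mem_sphere (by simpa using he)] at h
  simpa [dist_eq_norm, he, inv_mul_eq_div] using h

variable {c : E} {R : ℝ} {s : Set E}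

theorem hasFDerivWithinAt_inversion {x : E} (hx : x ≠ c) :
    HasFDerivWithinAt (inversion c R) (fderiv ℝ (inversion c R) x) s x :=
  (EuclideanGeometry.hasFDerivAt_inversion hx).differentiableAt.hasFDerivAt.hasFDerivWithinAt

variable [FiniteDimensional ℝ E]

theorem abs_det_fderiv_inversion {x : E} (hx : x ≠ c) :
    |(fderiv ℝ (inversion c R) x).det| = ((R / dist x c) ^ 2) ^ finrank ℝ E := by
  have hreflection := congrArg abs (ℝ ∙ (x - c))ᗮ.det_reflection
  rw [abs_pow, abs_neg, abs_one, one_pow] at hreflection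
  rw [(EuclideanGeometry.hasFDerivAt_inversion hx).fderiv, ContinuousLinearMap.det,
    ContinuousLinearMap.toLinearMap_smul, LinearMap.det_smul, abs_mul,
    abs_of_nonneg (by positivity)]
  exact mul_right_eq_self₀.2 (.inl hreflection)

variable [MeasurableSpace E] [BorelSpace E] {μ : Measure E} [μ.IsAddHaarMeasure]
  {F : Type*} [NormedAddCommGroup F] [NormedSpace ℝ F]

theorem integrableOn_image_inversion_iff (hR : R ≠ 0) (hs : MeasurableSet s) (hcs : c ∉ s)
    (f : E → F) :
    IntegrableOn f (inversion c R '' s) μ ↔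
      IntegrableOn (fun x => ((R / dist x c) ^ 2) ^ finrank ℝ E • f (inversion c R x)) s μ := by
  rw [integrableOn_image_iff_integrableOn_abs_det_fderiv_smul μ hs
    (fun x hx => hasFDerivWithinAt_inversion (ne_of_mem_of_not_mem hx hcs))
    (EuclideanGeometry.inversion_injective c hR).injOn]
  refine integrableOn_congr_fun (fun x hx => ?_) hs
  rw [abs_det_fderiv_inversion (ne_of_mem_of_not_mem hx hcs)]

theorem setIntegral_image_inversion (hR : R ≠ 0) (hs : MeasurableSet s) (hcs : c ∉ s)
    (f : E → F) :
    ∫ x in inversion c R '' s, f x ∂μ =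
      ∫ x in s, ((R / dist x c) ^ 2) ^ finrank ℝ E • f (inversion c R x) ∂μ := by
  rw [integral_image_eq_integral_abs_det_fderiv_smul μ hs
    (fun x hx => hasFDerivWithinAt_inversion (ne_of_mem_of_not_mem hx hcs))
    (EuclideanGeometry.inversion_injective c hR).injOn]
  refine setIntegral_congr_fun hs fun x hx => ?_
  simp only [abs_det_fderiv_inversion (ne_of_mem_of_not_mem hx hcs)]

end Inversion

section Integrand

variable {E : Type*} [NormedAddCommGroup E]

/-- The integrand `|1 - |z|^γ|^(p-2) (1 - |z|^γ) / |e - z|^a` of the principal value, with the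
exponent `n + s p` of the kernel as a free parameter `a`. -/
def pvIntegrand (p γ a : ℝ) (e z : E) : ℝ :=
  (|1 - ‖z‖ ^ γ| ^ (p - 2) * (1 - ‖z‖ ^ γ)) / ‖e - z‖ ^ a

/-- The pullback of `pvIntegrand p γ a e` under inversion in the unit sphere, Jacobian included,
for `|z| < 1`. The exponent `σ` is determined by the others and the dimension, see
`jacobian_mul_pvIntegrand_inversion`. -/
def pulledBackIntegrand (p γ a σ : ℝ) (e z : E) : ℝ :=
  ‖z‖ ^ (-σ) * (‖z‖ ^ γ - 1) ^ (p - 1) / ‖e - z‖ ^ a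

/-- The sum of `pvIntegrand` and `pulledBackIntegrand` on the unit ball. Its integral is the
principal value. -/
def foldedIntegrand (p γ a σ : ℝ) (e z : E) : ℝ :=
  (1 - ‖z‖ ^ σ) * pulledBackIntegrand p γ a σ e z

variable (E) in
/-- The open unit ball without its center, which inversion in the unit sphere exchanges with the
exterior of the closed unit ball. -/
def puncturedBall : Set E := {z | ‖z‖ ∈ Set.Ioo 0 1}

/-- The part of the punctured ball that lies in the domain `|e - z| > ε` of the truncated integral.
-/
def truncatedBall (e : E) (ε : ℝ) : Set E := puncturedBall E ∩ {z | ε < ‖e - z‖}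

/-- The part of the domain `|e - z| > ε` of the truncated integral that lies outside the closed unit
ball. -/
def truncatedExterior (e : E) (ε : ℝ) : Set E := {z | 1 < ‖z‖} ∩ {z | ε < ‖e - z‖}

/-- The image of `truncatedExterior e ε` under inversion in the unit sphere, see
`inversion_image_pulledBackBall`. -/
def pulledBackBall (e : E) (ε : ℝ) : Set E := puncturedBall E ∩ {z | ε * ‖z‖ < ‖e - z‖}

variable {p γ a σ ε : ℝ} {e z : E}

theorem ne_zero_of_mem_puncturedBall (hz : z ∈ puncturedBall E) : z ≠ 0 := norm_pos_iff.1 hz.1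

theorem one_sub_norm_le_norm_sub (he : ‖e‖ = 1) (z : E) : 1 - ‖z‖ ≤ ‖e - z‖ :=
  he ▸ norm_sub_norm_le e z

theorem norm_sub_pos_of_mem_puncturedBall (he : ‖e‖ = 1) (hz : z ∈ puncturedBall E) :
    0 < ‖e - z‖ :=
  (sub_pos.2 hz.2).trans_le (one_sub_norm_le_norm_sub he z)

theorem isOpen_puncturedBall : IsOpen (puncturedBall E) := isOpen_Ioo.preimage continuous_norm

theorem isOpen_truncatedBall : IsOpen (truncatedBall e ε) :=
  isOpen_puncturedBall.inter (isOpen_lt (by fun_prop) (by fun_prop))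

theorem isOpen_truncatedExterior : IsOpen (truncatedExterior e ε) :=
  (isOpen_lt (by fun_prop) (by fun_prop)).inter (isOpen_lt (by fun_prop) (by fun_prop))

theorem isOpen_pulledBackBall : IsOpen (pulledBackBall e ε) :=
  isOpen_puncturedBall.inter (isOpen_lt (by fun_prop) (by fun_prop))

theorem truncatedBall_subset_pulledBackBall (hε : 0 ≤ ε) :
    truncatedBall e ε ⊆ pulledBackBall e ε := fun _ hz =>
  ⟨hz.1, (mul_le_of_le_one_right hε hz.1.2.le).trans_lt hz.2⟩

theorem pulledBackIntegrand_pos (he : ‖e‖ = 1) (hγ : γ < 0) (hz : z ∈ puncturedBall E) :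
    0 < pulledBackIntegrand p γ a σ e z := by
  have hnorm : 0 < ‖z‖ := hz.1
  have hdist : 0 < ‖e - z‖ := norm_sub_pos_of_mem_puncturedBall he hz
  have hbase : 0 < ‖z‖ ^ γ - 1 :=
    sub_pos.2 (Real.one_lt_rpow_of_pos_of_lt_one_of_neg hz.1 hz.2 hγ)
  unfold pulledBackIntegrand
  positivity

theorem pvIntegrand_eq_neg_rpow_mul_pulledBackIntegrand (hγ : γ < 0) (hz : z ∈ puncturedBall E) :
    pvIntegrand p γ a e z = -(‖z‖ ^ σ * pulledBackIntegrand p γ a σ e z) := by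
  have hbase : 1 - ‖z‖ ^ γ < 0 :=
    sub_neg.2 (Real.one_lt_rpow_of_pos_of_lt_one_of_neg hz.1 hz.2 hγ)
  have hcancel : ‖z‖ ^ σ * ‖z‖ ^ (-σ) = 1 := by
    rw [← Real.rpow_add hz.1, add_neg_cancel, Real.rpow_zero]
  rw [pvIntegrand, pulledBackIntegrand, abs_rpow_sub_two_mul_self_of_neg hbase, neg_sub,
    mul_div_assoc, ← mul_assoc, hcancel, one_mul, neg_div]

theorem foldedIntegrand_eq_add (hγ : γ < 0) (hz : z ∈ puncturedBall E) :
    foldedIntegrand p γ a σ e z = pvIntegrand p γ a e z + pulledBackIntegrand p γ a σ e z := by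
  rw [pvIntegrand_eq_neg_rpow_mul_pulledBackIntegrand hγ hz, foldedIntegrand]
  ring

theorem abs_pvIntegrand_le_pulledBackIntegrand (he : ‖e‖ = 1) (hγ : γ < 0) (hσ : 0 ≤ σ)
    (hz : z ∈ puncturedBall E) :
    |pvIntegrand p γ a e z| ≤ pulledBackIntegrand p γ a σ e z := by
  have hpos : 0 < pulledBackIntegrand p γ a σ e z := pulledBackIntegrand_pos he hγ hz
  rw [pvIntegrand_eq_neg_rpow_mul_pulledBackIntegrand hγ hz, abs_neg, abs_of_nonneg (by positivity)]
  exact mul_le_of_le_one_left hpos.le (Real.rpow_le_one hz.1.le hz.2.le hσ)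

theorem foldedIntegrand_nonneg (he : ‖e‖ = 1) (hγ : γ < 0) (hσ : 0 ≤ σ)
    (hz : z ∈ puncturedBall E) : 0 ≤ foldedIntegrand p γ a σ e z :=
  mul_nonneg (sub_nonneg.2 (Real.rpow_le_one hz.1.le hz.2.le hσ))
    (pulledBackIntegrand_pos he hγ hz).le

theorem foldedIntegrand_pos (he : ‖e‖ = 1) (hγ : γ < 0) (hσ : 0 < σ)
    (hz : z ∈ puncturedBall E) : 0 < foldedIntegrand p γ a σ e z :=
  mul_pos (sub_pos.2 (Real.rpow_lt_one hz.1.le hz.2 hσ)) (pulledBackIntegrand_pos he hγ hz)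

theorem norm_sub_mul_pulledBackIntegrand_le (he : ‖e‖ = 1) (hp : 1 ≤ p) (hγ : γ ≤ 0)
    (hz : z ∈ puncturedBall E) :
    ‖e - z‖ * pulledBackIntegrand p γ a σ e z ≤
      (1 - γ) ^ (p - 1) * (‖z‖ ^ (γ * (p - 1) - σ) * ‖e - z‖ ^ (p - a)) := by
  have hnorm : 0 < ‖z‖ := hz.1
  have hdist : 0 < ‖e - z‖ := norm_sub_pos_of_mem_puncturedBall he hz
  have hbase : 0 ≤ ‖z‖ ^ γ - 1 :=
    sub_nonneg.2 (Real.one_le_rpow_of_pos_of_le_one_of_nonpos hnorm hz.2.le hγ)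
  have base_le : ‖z‖ ^ γ - 1 ≤ (1 - γ) * (‖z‖ ^ γ * ‖e - z‖) := by
    calc ‖z‖ ^ γ - 1 ≤ (1 - γ) * (‖z‖ ^ γ * (1 - ‖z‖)) := by
          simpa [sub_eq_add_neg] using rpow_neg_sub_one_le (neg_nonneg.2 hγ) hnorm hz.2.le
      _ ≤ (1 - γ) * (‖z‖ ^ γ * ‖e - z‖) := by
          gcongr
          · linarith
          · exact one_sub_norm_le_norm_sub he z
  have split_norm : ‖z‖ ^ (γ * (p - 1) - σ) = ‖z‖ ^ (-σ) * ‖z‖ ^ (γ * (p - 1)) := by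
    rw [← Real.rpow_add hnorm, neg_add_eq_sub]
  have split_dist : ‖e - z‖ ^ (p - a) = ‖e - z‖ * ‖e - z‖ ^ (p - 1) / ‖e - z‖ ^ a := by
    rw [← Real.rpow_one_add' hdist.le (by linarith), ← Real.rpow_sub hdist, add_sub_cancel]
  calc ‖e - z‖ * pulledBackIntegrand p γ a σ e z
      ≤ ‖e - z‖ * (‖z‖ ^ (-σ) * ((1 - γ) * (‖z‖ ^ γ * ‖e - z‖)) ^ (p - 1) / ‖e - z‖ ^ a) := by
        unfold pulledBackIntegrand
        gcongr
    _ = (1 - γ) ^ (p - 1) * (‖z‖ ^ (γ * (p - 1) - σ) * ‖e - z‖ ^ (p - a)) := by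
        rw [Real.mul_rpow (by linarith) (by positivity), Real.mul_rpow (by positivity) hdist.le,
          ← Real.rpow_mul hnorm.le, split_norm, split_dist]
        ring

theorem foldedIntegrand_le (he : ‖e‖ = 1) (hp : 1 ≤ p) (hγ : γ < 0) (hσ : 0 ≤ σ)
    (hz : z ∈ puncturedBall E) :
    foldedIntegrand p γ a σ e z ≤
      (1 + σ) * ((1 - γ) ^ (p - 1) * (‖z‖ ^ (γ * (p - 1) - σ) * ‖e - z‖ ^ (p - a))) := by
  have weight_le : 1 - ‖z‖ ^ σ ≤ (1 + σ) * ‖e - z‖ :=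
    (one_sub_rpow_le hσ hz.1.le hz.2.le).trans <|
      mul_le_mul_of_nonneg_left (one_sub_norm_le_norm_sub he z) (by linarith)
  calc foldedIntegrand p γ a σ e z
      ≤ (1 + σ) * ‖e - z‖ * pulledBackIntegrand p γ a σ e z :=
        mul_le_mul_of_nonneg_right weight_le (pulledBackIntegrand_pos he hγ hz).le
    _ = (1 + σ) * (‖e - z‖ * pulledBackIntegrand p γ a σ e z) := mul_assoc ..
    _ ≤ _ := mul_le_mul_of_nonneg_left
        (norm_sub_mul_pulledBackIntegrand_le he hp hγ.le hz) (by linarith)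

theorem mem_pulledBackBall_sdiff_truncatedBall :
    z ∈ pulledBackBall e ε \ truncatedBall e ε ↔
      z ∈ puncturedBall E ∧ ε * ‖z‖ < ‖e - z‖ ∧ ‖e - z‖ ≤ ε := by
  simp only [pulledBackBall, truncatedBall, Set.mem_sdiff, Set.mem_inter_iff, Set.mem_ofPred_eq,
    ← not_lt]
  tauto

theorem pulledBackBall_sdiff_truncatedBall_subset_shell (he : ‖e‖ = 1) (hε : 0 ≤ ε) :
    pulledBackBall e ε \ truncatedBall e ε ⊆ closedBall e ε \ ball e ((1 - ε) * ε) := by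
  intro z hz
  obtain ⟨-, hgt, hle⟩ := mem_pulledBackBall_sdiff_truncatedBall.1 hz
  rw [Set.mem_sdiff, mem_closedBall', mem_ball', dist_eq_norm, not_lt]
  refine ⟨hle, ?_⟩
  have norm_ge : 1 - ε ≤ ‖z‖ := by linarith [one_sub_norm_le_norm_sub he z]
  nlinarith

theorem norm_pulledBackIntegrand_le_of_mem_sdiff (he : ‖e‖ = 1) (hp : 1 ≤ p) (hγ : γ < 0)
    (hε : 0 < ε) (hε2 : ε ≤ 2⁻¹) (hz : z ∈ pulledBackBall e ε \ truncatedBall e ε) :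
    ‖pulledBackIntegrand p γ a σ e z‖ ≤
      (1 - γ) ^ (p - 1) * 2 ^ |γ * (p - 1) - σ| * 2 ^ |p - a - 1| * ε ^ (p - a - 1) := by
  obtain ⟨hball, hgt, hle⟩ := mem_pulledBackBall_sdiff_truncatedBall.1 hz
  have hdist : 0 < ‖e - z‖ := norm_sub_pos_of_mem_puncturedBall he hball
  have norm_ge : 2⁻¹ ≤ ‖z‖ := by linarith [one_sub_norm_le_norm_sub he z]
  have norm_rpow_le : ‖z‖ ^ (γ * (p - 1) - σ) ≤ 2 ^ |γ * (p - 1) - σ| :=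
    rpow_le_rpow_abs two_pos norm_ge (by linarith [hball.2])
  have dist_rpow_le : ‖e - z‖ ^ (p - a - 1) ≤ 2 ^ |p - a - 1| * ε ^ (p - a - 1) := by
    rw [← div_le_iff₀ (by positivity), ← Real.div_rpow hdist.le hε.le]
    refine rpow_le_rpow_abs two_pos ?_ ?_
    · rw [le_div_iff₀ hε]
      nlinarith
    · rw [div_le_iff₀ hε]
      linarith
  have hγ' : 0 ≤ (1 - γ) ^ (p - 1) := Real.rpow_nonneg (by linarith) _
  rw [Real.norm_of_nonneg (pulledBackIntegrand_pos he hγ hball).le]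
  calc pulledBackIntegrand p γ a σ e z
      ≤ (1 - γ) ^ (p - 1) * (‖z‖ ^ (γ * (p - 1) - σ) * ‖e - z‖ ^ (p - a - 1)) := by
        rw [Real.rpow_sub_one hdist.ne', ← mul_div_assoc, ← mul_div_assoc, le_div_iff₀ hdist,
          mul_comm]
        exact norm_sub_mul_pulledBackIntegrand_le he hp hγ.le hball
    _ ≤ (1 - γ) ^ (p - 1) *
          (2 ^ |γ * (p - 1) - σ| * (2 ^ |p - a - 1| * ε ^ (p - a - 1))) := by gcongr
    _ = _ := by ring

end Integrand

section Fold

variable {E : Type*} [NormedAddCommGroup E] [InnerProductSpace ℝ E] {p γ a σ ε : ℝ} {e z : E}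

theorem jacobian_mul_pvIntegrand_inversion (he : ‖e‖ = 1) (hγ : γ < 0)
    (hrel : γ * (p - 1) = a - 2 * finrank ℝ E + σ) (hz : z ∈ puncturedBall E) :
    ((1 / dist z 0) ^ 2) ^ finrank ℝ E • pvIntegrand p γ a e (inversion 0 1 z) =
      pulledBackIntegrand p γ a σ e z := by
  have hnorm : 0 < ‖z‖ := hz.1
  have hbase : 0 < ‖z‖ ^ γ - 1 :=
    sub_pos.2 (Real.one_lt_rpow_of_pos_of_lt_one_of_neg hz.1 hz.2 hγ)
  have base_inversion : 1 - ‖z‖⁻¹ ^ γ = ‖z‖ ^ (-γ) * (‖z‖ ^ γ - 1) := by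
    rw [mul_sub, ← Real.rpow_add hnorm, neg_add_cancel, Real.rpow_zero, mul_one,
      Real.inv_rpow hnorm.le, Real.rpow_neg hnorm.le]
  have jacobian_eq : ((1 / dist z 0) ^ 2) ^ finrank ℝ E = ‖z‖ ^ (-(2 * finrank ℝ E : ℝ)) := by
    rw [dist_zero_right, ← pow_mul, one_div, inv_pow, Real.rpow_neg hnorm.le]
    exact_mod_cast congrArg Inv.inv (Real.rpow_natCast ‖z‖ (2 * finrank ℝ E)).symm
  have exponents : ‖z‖ ^ (-(2 * finrank ℝ E : ℝ)) * ‖z‖ ^ (-γ * (p - 1)) * ‖z‖ ^ a =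
      ‖z‖ ^ (-σ) := by
    rw [← Real.rpow_add hnorm, ← Real.rpow_add hnorm]
    congr 1
    linarith
  rw [smul_eq_mul, jacobian_eq, pvIntegrand, pulledBackIntegrand, norm_inversion_zero_one,
    norm_sub_inversion_zero_one he (ne_zero_of_mem_puncturedBall hz), base_inversion,
    abs_rpow_sub_two_mul_self_of_pos (by positivity), Real.mul_rpow (by positivity) hbase.le,
    ← Real.rpow_mul hnorm.le, Real.div_rpow (norm_nonneg _) hnorm.le, ← exponents,
    div_div_eq_mul_div]
  ring

theorem inversion_image_pulledBackBall (he : ‖e‖ = 1) :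
    inversion 0 1 '' pulledBackBall e ε = truncatedExterior e ε := by
  ext z
  rw [(EuclideanGeometry.inversion_involutive (0 : E) one_ne_zero).image_eq_preimage_symm]
  simp only [truncatedExterior, pulledBackBall, puncturedBall, Set.mem_preimage,
    Set.mem_inter_iff, Set.mem_ofPred_eq, norm_inversion_zero_one, Set.mem_Ioo, inv_pos]
  rcases eq_or_ne z 0 with rfl | hz
  · simp
  · have hnorm : 0 < ‖z‖ := norm_pos_iff.2 hz
    rw [norm_sub_inversion_zero_one he hz, ← div_eq_mul_inv, div_lt_div_iff_of_pos_right hnorm,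
      inv_lt_one₀ hnorm, and_iff_right hnorm]

end Fold

section Integrability

variable {E : Type*} [NormedAddCommGroup E] [MeasurableSpace E] [BorelSpace E]
  {p γ a σ ε : ℝ} {e : E}

theorem measurable_pvIntegrand : Measurable (pvIntegrand p γ a e) := by
  unfold pvIntegrand
  fun_prop

theorem measurable_pulledBackIntegrand : Measurable (pulledBackIntegrand p γ a σ e) := by
  unfold pulledBackIntegrand
  fun_prop

theorem measurable_foldedIntegrand : Measurable (foldedIntegrand p γ a σ e) :=
  Measurable.mul (by fun_prop) measurable_pulledBackIntegrand

theorem tendsto_setIntegral_truncatedBall {μ : Measure E} {F : Type*} [NormedAddCommGroup F]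
    [NormedSpace ℝ F] {f : E → F} (he : ‖e‖ = 1) (hf : IntegrableOn f (puncturedBall E) μ) :
    Tendsto (fun ε => ∫ z in truncatedBall e ε, f z ∂μ) (𝓝[>] 0)
      (𝓝 (∫ z in puncturedBall E, f z ∂μ)) := by
  have exhaustion : AECover (μ.restrict (puncturedBall E)) (𝓝[>] 0)
      fun ε => {z | ε < ‖e - z‖} :=
    ⟨ae_restrict_of_forall_mem isOpen_puncturedBall.measurableSet fun z hz =>
      nhdsWithin_le_nhds (Iio_mem_nhds (norm_sub_pos_of_mem_puncturedBall he hz)),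
      fun ε => (isOpen_lt (by fun_prop) (by fun_prop)).measurableSet⟩
  simpa only [Measure.restrict_restrict' isOpen_puncturedBall.measurableSet, Set.inter_comm,
    truncatedBall] using exhaustion.integral_tendsto_of_countably_generated hf

variable [NormedSpace ℝ E] [FiniteDimensional ℝ E] {μ : Measure E} [μ.IsAddHaarMeasure]

theorem integrableOn_norm_rpow_mul_norm_sub_rpow {b c : ℝ} (he : e ≠ 0)
    (hb : -(finrank ℝ E : ℝ) < b) (hc : -(finrank ℝ E : ℝ) < c) :
    IntegrableOn (fun z => ‖z‖ ^ b * ‖e - z‖ ^ c) (puncturedBall E) μ := by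
  have : Nontrivial E := nontrivial_of_ne e 0 he
  have hloc := locallyIntegrable_norm_sub_rpow_mul_norm_sub_rpow (μ := μ) he.symm hb hc
  simp only [zero_sub, norm_neg] at hloc
  exact (hloc.integrableOn_isCompact (isCompact_closedBall 0 1)).mono_set fun z hz =>
    mem_closedBall_zero_iff.2 hz.2.le

theorem integrableOn_foldedIntegrand (he : ‖e‖ = 1) (hp : 1 ≤ p) (hγ : γ < 0) (hσ : 0 ≤ σ)
    (hb : -(finrank ℝ E : ℝ) < γ * (p - 1) - σ) (hc : -(finrank ℝ E : ℝ) < p - a) :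
    IntegrableOn (foldedIntegrand p γ a σ e) (puncturedBall E) μ := by
  have he0 : e ≠ 0 := norm_ne_zero_iff.1 (he ▸ one_ne_zero)
  refine (((integrableOn_norm_rpow_mul_norm_sub_rpow he0 hb hc).const_mul
    ((1 - γ) ^ (p - 1))).const_mul (1 + σ)).mono'
      measurable_foldedIntegrand.aestronglyMeasurable ?_
  refine ae_restrict_of_forall_mem isOpen_puncturedBall.measurableSet fun z hz => ?_
  rw [Real.norm_of_nonneg (foldedIntegrand_nonneg he hγ hσ hz)]
  exact foldedIntegrand_le he hp hγ hσ hz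

theorem integrableOn_pulledBackIntegrand (he : ‖e‖ = 1) (hp : 1 ≤ p) (hγ : γ < 0)
    (hb : -(finrank ℝ E : ℝ) < γ * (p - 1) - σ) (hc : -(finrank ℝ E : ℝ) < p - a) (hε : 0 < ε) :
    IntegrableOn (pulledBackIntegrand p γ a σ e) (pulledBackBall e ε) μ := by
  have he0 : e ≠ 0 := norm_ne_zero_iff.1 (he ▸ one_ne_zero)
  refine ((((integrableOn_norm_rpow_mul_norm_sub_rpow he0 hb hc).mono_set
    Set.inter_subset_left).const_mul ((1 - γ) ^ (p - 1))).const_mul ((1 + ε) / ε)).mono'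
      measurable_pulledBackIntegrand.aestronglyMeasurable ?_
  refine ae_restrict_of_forall_mem isOpen_pulledBackBall.measurableSet fun z hz => ?_
  have hpos : 0 < pulledBackIntegrand p γ a σ e z := pulledBackIntegrand_pos he hγ hz.1
  have dist_ge : 1 ≤ (1 + ε) / ε * ‖e - z‖ := by
    rw [div_mul_eq_mul_div, one_le_div hε]
    linarith [one_sub_norm_le_norm_sub he z, hz.2.out,
      mul_le_mul_of_nonneg_left (one_sub_norm_le_norm_sub he z) hε.le]
  calc ‖pulledBackIntegrand p γ a σ e z‖ = pulledBackIntegrand p γ a σ e z :=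
        Real.norm_of_nonneg hpos.le
    _ ≤ (1 + ε) / ε * ‖e - z‖ * pulledBackIntegrand p γ a σ e z :=
        le_mul_of_one_le_left hpos.le dist_ge
    _ = (1 + ε) / ε * (‖e - z‖ * pulledBackIntegrand p γ a σ e z) := mul_assoc ..
    _ ≤ _ := mul_le_mul_of_nonneg_left
        (norm_sub_mul_pulledBackIntegrand_le he hp hγ.le hz.1) (by positivity)

theorem integrableOn_pvIntegrand (he : ‖e‖ = 1) (hp : 1 ≤ p) (hγ : γ < 0) (hσ : 0 ≤ σ)
    (hb : -(finrank ℝ E : ℝ) < γ * (p - 1) - σ) (hc : -(finrank ℝ E : ℝ) < p - a) (hε : 0 < ε) :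
    IntegrableOn (pvIntegrand p γ a e) (truncatedBall e ε) μ := by
  refine ((integrableOn_pulledBackIntegrand he hp hγ hb hc hε).mono_set
    (truncatedBall_subset_pulledBackBall hε.le)).mono'
      measurable_pvIntegrand.aestronglyMeasurable ?_
  exact ae_restrict_of_forall_mem isOpen_truncatedBall.measurableSet fun z hz =>
    abs_pvIntegrand_le_pulledBackIntegrand he hγ hσ hz.1

theorem setIntegral_foldedIntegrand_truncatedBall (he : ‖e‖ = 1) (hp : 1 ≤ p) (hγ : γ < 0)
    (hσ : 0 ≤ σ) (hb : -(finrank ℝ E : ℝ) < γ * (p - 1) - σ)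
    (hc : -(finrank ℝ E : ℝ) < p - a) (hε : 0 < ε) :
    ∫ z in truncatedBall e ε, foldedIntegrand p γ a σ e z ∂μ =
      ∫ z in truncatedBall e ε, pvIntegrand p γ a e z ∂μ +
        ∫ z in truncatedBall e ε, pulledBackIntegrand p γ a σ e z ∂μ := by
  rw [← integral_add (integrableOn_pvIntegrand he hp hγ hσ hb hc hε)
    ((integrableOn_pulledBackIntegrand he hp hγ hb hc hε).mono_set
      (truncatedBall_subset_pulledBackBall hε.le))]
  exact setIntegral_congr_fun isOpen_truncatedBall.measurableSet fun z hz =>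
    foldedIntegrand_eq_add hγ hz.1

theorem setOf_lt_norm_sub_ae_eq (he : e ≠ 0) :
    ({z | ε < ‖e - z‖} : Set E) =ᵐ[μ] (truncatedBall e ε ∪ truncatedExterior e ε : Set E) := by
  have : Nontrivial E := nontrivial_of_ne e 0 he
  have norm_ae_ne (r : ℝ) : ∀ᵐ z ∂μ, ‖z‖ ≠ r := by
    simpa using measure_eq_zero_iff_ae_notMem.1 (μ.addHaar_sphere (0 : E) r)
  refine eventuallyEq_set.2 ?_
  filter_upwards [norm_ae_ne 0, norm_ae_ne 1] with z hz0 hz1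
  have hcover : ‖z‖ ∈ Set.Ioo 0 1 ∨ 1 < ‖z‖ :=
    hz1.lt_or_gt.imp_left fun hz => ⟨(norm_nonneg z).lt_of_ne' hz0, hz⟩
  simp only [truncatedBall, truncatedExterior, puncturedBall, Set.mem_union, Set.mem_inter_iff,
    Set.mem_ofPred_eq, ← or_and_right, and_iff_right hcover]

end Integrability

section PrincipalValue

variable {E : Type*} [NormedAddCommGroup E] [InnerProductSpace ℝ E] [FiniteDimensional ℝ E]
  [MeasurableSpace E] [BorelSpace E] {μ : Measure E} [μ.IsAddHaarMeasure]
  {p γ a σ ε : ℝ} {e : E}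

theorem integrableOn_pvIntegrand_truncatedExterior_iff (he : ‖e‖ = 1) (hγ : γ < 0)
    (hrel : γ * (p - 1) = a - 2 * finrank ℝ E + σ) :
    IntegrableOn (pvIntegrand p γ a e) (truncatedExterior e ε) μ ↔
      IntegrableOn (pulledBackIntegrand p γ a σ e) (pulledBackBall e ε) μ := by
  rw [← inversion_image_pulledBackBall he, integrableOn_image_inversion_iff one_ne_zero
    isOpen_pulledBackBall.measurableSet fun h => ne_zero_of_mem_puncturedBall h.1 rfl]
  exact integrableOn_congr_fun (fun z hz => jacobian_mul_pvIntegrand_inversion he hγ hrel hz.1)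
    isOpen_pulledBackBall.measurableSet

theorem setIntegral_pvIntegrand_truncatedExterior (he : ‖e‖ = 1) (hγ : γ < 0)
    (hrel : γ * (p - 1) = a - 2 * finrank ℝ E + σ) :
    ∫ z in truncatedExterior e ε, pvIntegrand p γ a e z ∂μ =
      ∫ z in pulledBackBall e ε, pulledBackIntegrand p γ a σ e z ∂μ := by
  rw [← inversion_image_pulledBackBall he, setIntegral_image_inversion one_ne_zero
    isOpen_pulledBackBall.measurableSet fun h => ne_zero_of_mem_puncturedBall h.1 rfl]
  exact setIntegral_congr_fun isOpen_pulledBackBall.measurableSet fun z hz =>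
    jacobian_mul_pvIntegrand_inversion he hγ hrel hz.1

theorem setIntegral_pvIntegrand_eq (he : ‖e‖ = 1) (hp : 1 ≤ p) (hγ : γ < 0) (hσ : 0 ≤ σ)
    (hrel : γ * (p - 1) = a - 2 * finrank ℝ E + σ) (ha : finrank ℝ E < a)
    (hap : a < finrank ℝ E + p) (hε : 0 < ε) :
    ∫ z in {z | ε < ‖e - z‖}, pvIntegrand p γ a e z ∂μ =
      ∫ z in truncatedBall e ε, foldedIntegrand p γ a σ e z ∂μ +
        ∫ z in pulledBackBall e ε \ truncatedBall e ε, pulledBackIntegrand p γ a σ e z ∂μ := by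
  have hb : -(finrank ℝ E : ℝ) < γ * (p - 1) - σ := by linarith
  have hc : -(finrank ℝ E : ℝ) < p - a := by linarith
  have he0 : e ≠ 0 := norm_ne_zero_iff.1 (he ▸ one_ne_zero)
  have truncated_integrable : IntegrableOn (pvIntegrand p γ a e) (truncatedBall e ε) μ :=
    integrableOn_pvIntegrand he hp hγ hσ hb hc hε
  have pulledBack_integrable :
      IntegrableOn (pulledBackIntegrand p γ a σ e) (pulledBackBall e ε) μ :=
    integrableOn_pulledBackIntegrand he hp hγ hb hc hε
  have truncated_subset : truncatedBall e ε ⊆ pulledBackBall e ε :=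
    truncatedBall_subset_pulledBackBall hε.le
  have disjoint_exterior : Disjoint (truncatedBall e ε) (truncatedExterior e ε) :=
    Set.disjoint_left.2 fun z hz hz' => hz.1.2.not_gt hz'.1
  rw [setIntegral_congr_set (setOf_lt_norm_sub_ae_eq he0),
    setIntegral_union disjoint_exterior isOpen_truncatedExterior.measurableSet truncated_integrable
      ((integrableOn_pvIntegrand_truncatedExterior_iff he hγ hrel).2 pulledBack_integrable),
    setIntegral_pvIntegrand_truncatedExterior he hγ hrel,
    setIntegral_foldedIntegrand_truncatedBall he hp hγ hσ hb hc hε,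
    setIntegral_sdiff isOpen_truncatedBall.measurableSet pulledBack_integrable truncated_subset]
  ring

theorem tendsto_setIntegral_pulledBackBall_sdiff_truncatedBall (he : ‖e‖ = 1) (hp : 1 ≤ p)
    (hγ : γ < 0) (hap : a < finrank ℝ E + p) :
    Tendsto (fun ε => ∫ z in pulledBackBall e ε \ truncatedBall e ε,
      pulledBackIntegrand p γ a σ e z ∂μ) (𝓝[>] 0) (𝓝 0) := by
  refine tendsto_setIntegral_of_subset_shell (q := p - a - 1)
    (M := (1 - γ) ^ (p - 1) * 2 ^ |γ * (p - 1) - σ| * 2 ^ |p - a - 1|) ?_ (by linarith)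
    (x := e) ?_ ?_
  · have : 0 ≤ (1 - γ) ^ (p - 1) := Real.rpow_nonneg (by linarith) _
    positivity
  · filter_upwards [self_mem_nhdsWithin] with ε hε
    exact pulledBackBall_sdiff_truncatedBall_subset_shell he (le_of_lt hε)
  · filter_upwards [self_mem_nhdsWithin, nhdsWithin_le_nhds (Iic_mem_nhds (inv_pos.2 two_pos))]
      with ε hε hε2 z hz
    exact norm_pulledBackIntegrand_le_of_mem_sdiff he hp hγ hε hε2 hz

theorem tendsto_setIntegral_pvIntegrand (he : ‖e‖ = 1) (hp : 1 ≤ p) (hγ : γ < 0) (hσ : 0 ≤ σ)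
    (hrel : γ * (p - 1) = a - 2 * finrank ℝ E + σ) (ha : finrank ℝ E < a)
    (hap : a < finrank ℝ E + p) :
    Tendsto (fun ε => ∫ z in {z | ε < ‖e - z‖}, pvIntegrand p γ a e z ∂μ) (𝓝[>] 0)
      (𝓝 (∫ z in puncturedBall E, foldedIntegrand p γ a σ e z ∂μ)) := by
  have folded_integrable : IntegrableOn (foldedIntegrand p γ a σ e) (puncturedBall E) μ :=
    integrableOn_foldedIntegrand he hp hγ hσ (by linarith) (by linarith)
  have hlim := (tendsto_setIntegral_truncatedBall he folded_integrable).add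
    (tendsto_setIntegral_pulledBackBall_sdiff_truncatedBall (μ := μ) (σ := σ) he hp hγ hap)
  rw [add_zero] at hlim
  refine hlim.congr' ?_
  filter_upwards [self_mem_nhdsWithin] with ε hε
  exact (setIntegral_pvIntegrand_eq he hp hγ hσ hrel ha hap hε).symm

theorem setIntegral_foldedIntegrand_pos (he : ‖e‖ = 1) (hp : 1 ≤ p) (hγ : γ < 0) (hσ : 0 < σ)
    (hb : -(finrank ℝ E : ℝ) < γ * (p - 1) - σ) (hc : -(finrank ℝ E : ℝ) < p - a) :
    0 < ∫ z in puncturedBall E, foldedIntegrand p γ a σ e z ∂μ := by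
  refine setIntegral_pos_of_isOpen isOpen_puncturedBall ⟨(2⁻¹ : ℝ) • e, ?_⟩
    (integrableOn_foldedIntegrand he hp hγ hσ.le hb hc)
    fun z hz => foldedIntegrand_pos he hγ hσ hz
  rw [puncturedBall, Set.mem_ofPred_eq, norm_smul, he]
  norm_num

end PrincipalValue

theorem stmt_16_general {E : Type*} [NormedAddCommGroup E] [InnerProductSpace ℝ E]
    [FiniteDimensional ℝ E] [MeasurableSpace E] [BorelSpace E] {μ : Measure E}
    [μ.IsAddHaarMeasure] {s p σ γ : ℝ} {e : E} (he : ‖e‖ = 1) (hs : s ∈ Set.Ioo (0 : ℝ) 1)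
    (hp : 1 < p) (hσ : 0 < σ) (hσ' : s * p + σ < finrank ℝ E)
    (hγ : γ = (s * p - finrank ℝ E + σ) / (p - 1)) :
    ∃ L : ℝ, 0 < L ∧
      Tendsto (fun ε : ℝ => ∫ z in {z : E | ε < ‖e - z‖},
          (|1 - ‖z‖ ^ γ| ^ (p - 2) * (1 - ‖z‖ ^ γ)) / ‖e - z‖ ^ (finrank ℝ E + s * p) ∂μ)
        (𝓝[>] 0) (𝓝 L) := by
  have hγ_neg : γ < 0 := hγ ▸ div_neg_of_neg_of_pos (by linarith) (by linarith)
  have hrel : γ * (p - 1) = finrank ℝ E + s * p - 2 * finrank ℝ E + σ := by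
    rw [hγ, div_mul_cancel₀ _ (by linarith)]
    ring
  have hsp : 0 < s * p := mul_pos hs.1 (by linarith)
  have hsp_lt : s * p < p := mul_lt_of_lt_one_left (by linarith) hs.2
  exact ⟨_, setIntegral_foldedIntegrand_pos he hp.le hγ_neg hσ (by linarith) (by linarith),
    tendsto_setIntegral_pvIntegrand he hp.le hγ_neg hσ.le hrel (by linarith) (by linarith)⟩

theorem stmt_16 (n : ℕ) (hn : 0 < n) (s p σ : ℝ) (hs : s ∈ Set.Ioo (0 : ℝ) 1)
    (hp : 1 < p) (hspn : s * p < n) (hσ : 0 < σ) (hσ' : s * p + σ < n)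
    (γ : ℝ) (hγ : γ = (s * p - n + σ) / (p - 1)) :
    ∃ L : ℝ, 0 < L ∧
      Tendsto (fun ε : ℝ =>
          ∫ z in {z : EuclideanSpace ℝ (Fin n) |
              ε < ‖EuclideanSpace.single (⟨0, hn⟩ : Fin n) (1 : ℝ) - z‖},
            (|1 - ‖z‖ ^ γ| ^ (p - 2) * (1 - ‖z‖ ^ γ)) /
              ‖EuclideanSpace.single (⟨0, hn⟩ : Fin n) (1 : ℝ) - z‖ ^ ((n : ℝ) + s * p))
        (nhdsWithin 0 (Set.Ioi 0)) (nhds L) := by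
  rw [← finrank_euclideanSpace_fin (𝕜 := ℝ) (n := n)] at hσ' hγ
  simpa only [finrank_euclideanSpace_fin] using
    stmt_16_general (μ := volume) (by simp) hs hp hσ hσ' hγ
end
end
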